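/- arXiv:2312.06540 — 15 statements merged into one kernel-verified Lean document; each statement's English description precedes it below -/
import Mathlib

section
/- Suppose the set-valued operators A : ℝⁿ ⇉ ℝⁿ and B : ℝᵐ ⇉ ℝᵐ have closed graphs and L ∈ ℝ^{m×n} is a nonzero matrix with operator norm ‖L‖. Suppose there exists (x⋆, y⋆) ∈ zer T_PD such that A is (μ_A·LᵀL, ρ_A·I_n)-semimonotone at (x⋆, −Lᵀy⋆) ∈ graph A, B is (μ_B·I_m, ρ_B·L Lᵀ)-semimonotone at (L x⋆, y⋆) ∈ graph B, and the real numbers (μ_A, μ_B, ρ_A, ρ_B) satisfy one of the following: (i) μ_A = μ_B = 0 and ρ_A = ρ_B = 0; (ii) μ_A + μ_B > 0 and ρ_A = ρ_B = 0; (iii) ρ_A + ρ_B > 0 and μ_A = μ_B = 0; (iv) μ_A + μ_B > 0, ρ_A + ρ_B > 0 and min{0, μ_Aμ_B/(μ_A+μ_B)}·min{0, ρ_Aρ_B/(ρ_A+ρ_B)} < 1/(4‖L‖²). Then there exist stepsizes γ, τ > 0 and a sequence (λ_k)_{k∈ℕ} of strictly positive reals such that, whenever the resolvents J_{γA} and J_{τB⁻¹}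 are nonempty-valued at every point, every CPA sequence (x^k, y^k), (x̄^k, ȳ^k) either satisfies (0,0) ∈ T_PD(x̄^k, ȳ^k) for some k, or every limit point of the sequence ((x̄^k, ȳ^k))_{k∈ℕ} belongs to zer T_PD. -/
/-!
The Chambolle–Pock iteration is a relaxed proximal point method for `T_PD` with the preconditioner
`P = [[γ⁻¹ I, -Lᵀ], [-L, τ⁻¹ I]]`: writing `z = (x, y)` and `d = z - z̄`, one has
`P d ∈ T_PD z̄`. Completing squares in the two semimonotonicity inequalities gives an oblique weak
Minty inequality `⟨z̄ - z⋆, v⟩ ≥ -a |v₁|² - b |v₂|²` for `v ∈ T_PD z̄` (`weak_minty`), and the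
parameter conditions allow `a, b > 0` with `4 a b ‖L‖² < 1` (`exists_params`).

The stepsizes `γ = 2a`, `τ = 2b` make `P` positive definite and at the same time give
`⟨d, P d⟩ - a |v₁|² - b |v₂|² = |d₁|²/(4a) + |d₂|²/(4b) - a |Lᵀ d₂|² - b |L d₁|²` for `v = P d`,
which dominates a positive multiple of `|d|²`. Hence, for a small constant relaxation parameter,
the squared `P`-distance to `(x⋆, y⋆)` decreases by a multiple of `|d|²` at each step
(`energy_decrease`). So `d → 0` and `P d → 0`, and closedness of the graphs of `A` and `B` puts
every limit point of `z̄` in `zer T_PD`.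
-/

open Matrix Filter

noncomputable section

abbrev Vec (n : ℕ) := Fin n → ℝ

/-- `A` is `(M,R)`-semimonotone at `(xb, yb) ∈ graph A`. -/
def SemimonotoneAt {n : ℕ} (A : Vec n → Set (Vec n)) (M R : Matrix (Fin n) (Fin n) ℝ)
    (xb yb : Vec n) : Prop :=
  ∀ x y, y ∈ A x →
    (x - xb) ⬝ᵥ (y - yb) ≥ (x - xb) ⬝ᵥ M.mulVec (x - xb) + (y - yb) ⬝ᵥ R.mulVec (y - yb)

/-- The primal-dual operator `T_PD(x,y) = {(a + Lᵀy, b − Lx) : a ∈ A x, b ∈ B⁻¹ y}`. -/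
def TPD {n m : ℕ} (A : Vec n → Set (Vec n)) (B : Vec m → Set (Vec m))
    (L : Matrix (Fin m) (Fin n) ℝ) (z : Vec n × Vec m) : Set (Vec n × Vec m) :=
  {v | ∃ a b, a ∈ A z.1 ∧ z.2 ∈ B b ∧ v = (a + Lᵀ.mulVec z.2, b - L.mulVec z.1)}

def zerTPD {n m : ℕ} (A : Vec n → Set (Vec n)) (B : Vec m → Set (Vec m))
    (L : Matrix (Fin m) (Fin n) ℝ) : Set (Vec n × Vec m) :=
  {z | (0, 0) ∈ TPD A B L z}

/-- The inverse operator `B⁻¹`. -/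
def SetInv {m : ℕ} (B : Vec m → Set (Vec m)) : Vec m → Set (Vec m) := fun y => {u | y ∈ B u}

/-- `z ∈ J_{γA}(w)`, i.e. `w − z ∈ γ • A z`. -/
def InResolvent {n : ℕ} (γ : ℝ) (A : Vec n → Set (Vec n)) (w z : Vec n) : Prop :=
  ∃ a ∈ A z, w - z = γ • a

/-- Euclidean operator norm of a matrix. -/
def opNorm {m n : ℕ} (L : Matrix (Fin m) (Fin n) ℝ) : ℝ :=
  ‖LinearMap.toContinuousLinearMap (Matrix.toEuclideanLin L)‖

/-- `(x, xb, y, yb)` is a Chambolle–Pock sequence with stepsizes `γ, τ` and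
relaxation parameters `lam`. -/
def IsCPASeq {n m : ℕ} (A : Vec n → Set (Vec n)) (B : Vec m → Set (Vec m))
    (L : Matrix (Fin m) (Fin n) ℝ) (γ τ : ℝ) (lam : ℕ → ℝ)
    (x xb : ℕ → Vec n) (y yb : ℕ → Vec m) : Prop :=
  ∀ k, InResolvent γ A (x k - γ • Lᵀ.mulVec (y k)) (xb k) ∧
    InResolvent τ (SetInv B) (y k + τ • L.mulVec ((2 : ℝ) • xb k - x k)) (yb k) ∧
    x (k + 1) = x k + lam k • (xb k - x k) ∧
    y (k + 1) = y k + lam k • (yb k - y k)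

section Aux

variable {n m : ℕ}

/-! ### Dot products and the operator norm -/

lemma dot_nonneg (u : Vec n) : 0 ≤ u ⬝ᵥ u :=
  Finset.sum_nonneg fun i _ => mul_self_nonneg (u i)

lemma dot_mulVec_comm (L : Matrix (Fin m) (Fin n) ℝ) (u : Vec n) (w : Vec m) :
    u ⬝ᵥ Lᵀ.mulVec w = w ⬝ᵥ L.mulVec u := by
  rw [dotProduct_mulVec, vecMul_transpose, dotProduct_comm]

/-- Young's inequality for the dot product. -/
lemma two_dot_le (u v : Vec n) {c : ℝ} (hc : 0 < c) :
    2 * (u ⬝ᵥ v) ≤ c * (u ⬝ᵥ u) + c⁻¹ * (v ⬝ᵥ v) := by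
  have h := dot_nonneg (c • u - v)
  simp only [sub_dotProduct, dotProduct_sub, smul_dotProduct, dotProduct_smul, smul_eq_mul] at h
  rw [dotProduct_comm v u] at h
  have h2 : 0 ≤ c⁻¹ * (c * (c * (u ⬝ᵥ u) - u ⬝ᵥ v) - (c * (u ⬝ᵥ v) - v ⬝ᵥ v)) :=
    mul_nonneg (inv_pos.2 hc).le h
  have e : c⁻¹ * (c * (c * (u ⬝ᵥ u) - u ⬝ᵥ v) - (c * (u ⬝ᵥ v) - v ⬝ᵥ v))
      = c * (u ⬝ᵥ u) + c⁻¹ * (v ⬝ᵥ v) - 2 * (u ⬝ᵥ v) := by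
    field_simp
    ring
  linarith

lemma opNorm_pos {L : Matrix (Fin m) (Fin n) ℝ} (hL : L ≠ 0) : 0 < opNorm L := by
  unfold opNorm
  rw [norm_pos_iff]
  intro h
  apply hL
  simpa using h

lemma mulVec_dot_le (L : Matrix (Fin m) (Fin n) ℝ) (u : Vec n) :
    L.mulVec u ⬝ᵥ L.mulVec u ≤ opNorm L ^ 2 * (u ⬝ᵥ u) := by
  have h := (LinearMap.toContinuousLinearMap (Matrix.toEuclideanLin L)).le_opNorm (WithLp.toLp 2 u)
  have h2 := pow_le_pow_left₀ (norm_nonneg _) h 2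
  rw [mul_pow, EuclideanSpace.norm_sq_eq, EuclideanSpace.norm_sq_eq] at h2
  simpa [opNorm, dotProduct, ← pow_two] using h2

lemma transpose_mulVec_dot_le {L : Matrix (Fin m) (Fin n) ℝ} (hL : L ≠ 0) (w : Vec m) :
    Lᵀ.mulVec w ⬝ᵥ Lᵀ.mulVec w ≤ opNorm L ^ 2 * (w ⬝ᵥ w) := by
  have hp : 0 < opNorm L ^ 2 := pow_pos (opNorm_pos hL) 2
  have h1 := mulVec_dot_le L (Lᵀ.mulVec w)
  have h2 := two_dot_le w (L.mulVec (Lᵀ.mulVec w)) hp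
  rw [← dot_mulVec_comm] at h2
  have h3 : (opNorm L ^ 2)⁻¹ * (L.mulVec (Lᵀ.mulVec w) ⬝ᵥ L.mulVec (Lᵀ.mulVec w))
      ≤ Lᵀ.mulVec w ⬝ᵥ Lᵀ.mulVec w := by
    rw [inv_mul_le_iff₀ hp]
    exact h1
  linarith

/-! ### Choice of the moduli -/

/-- Completing the square, with the parallel sum of `c` and `d` truncated at zero. -/
lemma parallel_sum_bound {c d q : ℝ} (h : c + d > 0) (hq : -min 0 (c * d / (c + d)) ≤ q)
    (s t : ℝ) : -q * t ^ 2 ≤ c * s ^ 2 + d * (t + s) ^ 2 := by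
  have e : c * s ^ 2 + d * (t + s) ^ 2 = c * d / (c + d) * t ^ 2
      + ((c + d) * s + d * t) ^ 2 / (c + d) := by
    field_simp
    ring
  have h1 : 0 ≤ ((c + d) * s + d * t) ^ 2 / (c + d) := by positivity
  have h2 : -q ≤ c * d / (c + d) := by linarith [min_le_right 0 (c * d / (c + d))]
  have h3 := mul_le_mul_of_nonneg_right h2 (sq_nonneg t)
  linarith

lemma exists_enlarge {p q S : ℝ} (hp : 0 ≤ p) (hq : 0 ≤ q) (hS : 0 < S)
    (h : p * q < 1 / (4 * S)) :
    ∃ a b, 0 < a ∧ 0 < b ∧ p ≤ a ∧ q ≤ b ∧ 4 * a * b * S < 1 := by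
  obtain ⟨g, hg⟩ : ∃ g, g = 1 / (4 * S) - p * q := ⟨_, rfl⟩
  have hg0 : 0 < g := by linarith
  have hpq : 0 < p + q + 1 := by linarith
  obtain ⟨e, he⟩ : ∃ e, e = min 1 (g / (2 * (p + q + 1))) := ⟨_, rfl⟩
  have he0 : 0 < e := by rw [he]; positivity
  have he1 : e ≤ 1 := he ▸ min_le_left _ _
  have he2 : e * (2 * (p + q + 1)) ≤ g := by
    rw [← le_div_iff₀ (by positivity)]
    exact he ▸ min_le_right _ _
  refine ⟨p + e, q + e, by linarith, by linarith, by linarith, by linarith, ?_⟩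
  have h1 : (p + e) * (q + e) < 1 / (4 * S) := by nlinarith
  rw [lt_div_iff₀ (by positivity)] at h1
  linarith

/-- The parameter conditions yield weak Minty moduli `a`, `b` whose product leaves room for
stepsizes. -/
lemma exists_params {μA μB ρA ρB S : ℝ} (hS : 0 < S)
    (hcase : (μA = 0 ∧ μB = 0 ∧ ρA = 0 ∧ ρB = 0) ∨
      (μA + μB > 0 ∧ ρA = 0 ∧ ρB = 0) ∨
      (ρA + ρB > 0 ∧ μA = 0 ∧ μB = 0) ∨
      (μA + μB > 0 ∧ ρA + ρB > 0 ∧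
        min 0 (μA * μB / (μA + μB)) * min 0 (ρA * ρB / (ρA + ρB)) < 1 / (4 * S))) :
    ∃ a b, 0 < a ∧ 0 < b ∧ 4 * a * b * S < 1 ∧
      (∀ s t : ℝ, -b * t ^ 2 ≤ μA * s ^ 2 + μB * (t + s) ^ 2) ∧
      (∀ s t : ℝ, -a * t ^ 2 ≤ ρB * s ^ 2 + ρA * (t + s) ^ 2) := by
  -- A pair of vanishing moduli has parallel sum `0 / 0 = 0`, so the product bound of the last
  -- alternative holds in all of them.
  have hprod : min 0 (μA * μB / (μA + μB)) * min 0 (ρA * ρB / (ρA + ρB)) < 1 / (4 * S) := by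
    have : 0 < 1 / (4 * S) := by positivity
    rcases hcase with ⟨h1, h2, h3, h4⟩ | ⟨_, h3, h4⟩ | ⟨_, h1, h2⟩ | ⟨_, _, h⟩
    · simpa [h1, h2, h3, h4] using hS
    · simpa [h3, h4] using hS
    · simpa [h1, h2] using hS
    · exact h
  obtain ⟨a, b, ha, hb, hpa, hqb, hab⟩ := exists_enlarge
    (p := -min 0 (ρA * ρB / (ρA + ρB))) (q := -min 0 (μA * μB / (μA + μB)))
    (by simp) (by simp) hS (by linarith)
  have key : ∀ {c d q : ℝ}, 0 < q → (c + d > 0 ∨ (c = 0 ∧ d = 0)) →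
      -min 0 (c * d / (c + d)) ≤ q → ∀ s t : ℝ, -q * t ^ 2 ≤ c * s ^ 2 + d * (t + s) ^ 2 := by
    intro c d q hq h hle s t
    rcases h with h | ⟨rfl, rfl⟩
    · exact parallel_sum_bound h hle s t
    · have := mul_nonneg hq.le (sq_nonneg t)
      linarith
  refine ⟨a, b, ha, hb, hab, key hb (by tauto) hqb, key ha ?_ ?_⟩
  · rw [add_comm ρB ρA]
    tauto
  · rwa [add_comm ρB ρA, mul_comm ρB ρA]

/-! ### The weak Minty inequality -/

lemma dot_bound_of_pointwise {c d q : ℝ}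
    (h : ∀ s t : ℝ, -q * t ^ 2 ≤ c * s ^ 2 + d * (t + s) ^ 2) (s t : Vec n) :
    -q * (t ⬝ᵥ t) ≤ c * (s ⬝ᵥ s) + d * ((t + s) ⬝ᵥ (t + s)) := by
  simp only [dotProduct, Finset.mul_sum, ← Finset.sum_add_distrib]
  refine Finset.sum_le_sum fun i _ => ?_
  have := h (s i) (t i)
  simpa [pow_two] using this

/-- Oblique weak Minty inequality for `T_PD`. The arguments `u`, `w` are the primal and dual
errors, and `(v₁, v₂) ∈ T_PD` is presented through `v₁ - Lᵀ w ∈ A x - A x⋆` and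
`v₂ + L u ∈ B⁻¹ y - B⁻¹ y⋆`. -/
lemma weak_minty {L : Matrix (Fin m) (Fin n) ℝ} {μA μB ρA ρB a b : ℝ}
    (hb : ∀ s t : ℝ, -b * t ^ 2 ≤ μA * s ^ 2 + μB * (t + s) ^ 2)
    (ha : ∀ s t : ℝ, -a * t ^ 2 ≤ ρB * s ^ 2 + ρA * (t + s) ^ 2)
    (u v₁ : Vec n) (w v₂ : Vec m)
    (hA : u ⬝ᵥ (v₁ - Lᵀ.mulVec w) ≥ u ⬝ᵥ (μA • (Lᵀ * L)).mulVec u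
      + (v₁ - Lᵀ.mulVec w) ⬝ᵥ (ρA • (1 : Matrix (Fin n) (Fin n) ℝ)).mulVec (v₁ - Lᵀ.mulVec w))
    (hB : (v₂ + L.mulVec u) ⬝ᵥ w ≥
      (v₂ + L.mulVec u) ⬝ᵥ (μB • (1 : Matrix (Fin m) (Fin m) ℝ)).mulVec (v₂ + L.mulVec u)
      + w ⬝ᵥ (ρB • (L * Lᵀ)).mulVec w) :
    -a * (v₁ ⬝ᵥ v₁) - b * (v₂ ⬝ᵥ v₂) ≤ u ⬝ᵥ v₁ + w ⬝ᵥ v₂ := by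
  have h1 := dot_bound_of_pointwise hb (L.mulVec u) v₂
  have h2 := dot_bound_of_pointwise ha (-(Lᵀ.mulVec w)) v₁
  have e1 : u ⬝ᵥ (Lᵀ * L).mulVec u = L.mulVec u ⬝ᵥ L.mulVec u := by
    rw [← mulVec_mulVec, dot_mulVec_comm]
  have e2 : w ⬝ᵥ (L * Lᵀ).mulVec w = Lᵀ.mulVec w ⬝ᵥ Lᵀ.mulVec w := by
    rw [← mulVec_mulVec, ← dot_mulVec_comm]
  simp only [smul_mulVec, dotProduct_smul, smul_eq_mul, one_mulVec, e1, e2] at hA hB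
  rw [← sub_eq_add_neg, neg_dotProduct, dotProduct_neg, neg_neg] at h2
  have e3 : u ⬝ᵥ (v₁ - Lᵀ.mulVec w) = u ⬝ᵥ v₁ - w ⬝ᵥ L.mulVec u := by
    rw [dotProduct_sub, dot_mulVec_comm]
  have e4 : (v₂ + L.mulVec u) ⬝ᵥ w = w ⬝ᵥ v₂ + w ⬝ᵥ L.mulVec u := by
    rw [dotProduct_comm, dotProduct_add]
  rw [e3] at hA
  rw [e4] at hB
  linarith

/-! ### The preconditioned energy -/

/-- The quadratic form of the preconditioner `P = [[(2a)⁻¹ I, -Lᵀ], [-L, (2b)⁻¹ I]]`. -/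
def energy (L : Matrix (Fin m) (Fin n) ℝ) (a b : ℝ) (x : Vec n) (y : Vec m) : ℝ :=
  (2 * a)⁻¹ * (x ⬝ᵥ x) + (2 * b)⁻¹ * (y ⬝ᵥ y) - 2 * (y ⬝ᵥ L.mulVec x)

/-- The cross term of `energy` is at most half of `|x|²/a + |y|²/b`. -/
lemma cross_le {L : Matrix (Fin m) (Fin n) ℝ} {a b : ℝ} (ha : 0 < a) (hb : 0 < b)
    (hab : 4 * a * b * opNorm L ^ 2 < 1) (x : Vec n) (y : Vec m) :
    2 * (y ⬝ᵥ L.mulVec x) ≤ (2 * a)⁻¹ * (x ⬝ᵥ x) + (2 * b)⁻¹ * (y ⬝ᵥ y) := by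
  have h1 := two_dot_le y (L.mulVec x) (c := (2 * b)⁻¹) (by positivity)
  rw [inv_inv] at h1
  have h2 := mulVec_dot_le L x
  have h3 : 2 * b * opNorm L ^ 2 ≤ (2 * a)⁻¹ := by
    rw [← one_div, le_div_iff₀ (by positivity)]
    linarith
  have h4 := mul_le_mul_of_nonneg_left h2 (by positivity : 0 ≤ 2 * b)
  have h5 := mul_le_mul_of_nonneg_right h3 (dot_nonneg x)
  linarith

lemma energy_nonneg {L : Matrix (Fin m) (Fin n) ℝ} {a b : ℝ} (ha : 0 < a) (hb : 0 < b)
    (hab : 4 * a * b * opNorm L ^ 2 < 1) (x : Vec n) (y : Vec m) : 0 ≤ energy L a b x y := by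
  have := cross_le ha hb hab x y
  unfold energy
  linarith

lemma energy_le {L : Matrix (Fin m) (Fin n) ℝ} {a b : ℝ} (ha : 0 < a) (hb : 0 < b)
    (hab : 4 * a * b * opNorm L ^ 2 < 1) (x : Vec n) (y : Vec m) :
    energy L a b x y ≤ a⁻¹ * (x ⬝ᵥ x) + b⁻¹ * (y ⬝ᵥ y) := by
  have := cross_le ha hb hab (-x) y
  simp only [mulVec_neg, dotProduct_neg, neg_dotProduct, neg_neg] at this
  have e1 : a⁻¹ = 2 * (2 * a)⁻¹ := by field_simp
  have e2 : b⁻¹ = 2 * (2 * b)⁻¹ := by field_simp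
  unfold energy
  rw [e1, e2]
  linarith

/-- With `v = P d`, the energy of `d` exceeds `a |v₁|² + b |v₂|²` by a multiple of `|d|²`. -/
lemma energy_gap {L : Matrix (Fin m) (Fin n) ℝ} (hL : L ≠ 0) {a b : ℝ} (ha : 0 < a) (hb : 0 < b)
    (x v₁ : Vec n) (y v₂ : Vec m)
    (h₁ : v₁ = (2 * a)⁻¹ • x - Lᵀ.mulVec y) (h₂ : v₂ = (2 * b)⁻¹ • y - L.mulVec x) :
    (1 - 4 * a * b * opNorm L ^ 2) / 4 * (a⁻¹ * (x ⬝ᵥ x) + b⁻¹ * (y ⬝ᵥ y))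
      ≤ energy L a b x y - a * (v₁ ⬝ᵥ v₁) - b * (v₂ ⬝ᵥ v₂) := by
  have g1 := mul_le_mul_of_nonneg_left (mulVec_dot_le L x) hb.le
  have g2 := mul_le_mul_of_nonneg_left (transpose_mulVec_dot_le hL y) ha.le
  have e1 : a * (v₁ ⬝ᵥ v₁) = (4 * a)⁻¹ * (x ⬝ᵥ x) - y ⬝ᵥ L.mulVec x
      + a * (Lᵀ.mulVec y ⬝ᵥ Lᵀ.mulVec y) := by
    subst h₁
    simp only [sub_dotProduct, dotProduct_sub, smul_dotProduct, dotProduct_smul, smul_eq_mul]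
    rw [dotProduct_comm (Lᵀ.mulVec y) x, dot_mulVec_comm]
    field_simp
    ring
  have e2 : b * (v₂ ⬝ᵥ v₂) = (4 * b)⁻¹ * (y ⬝ᵥ y) - y ⬝ᵥ L.mulVec x
      + b * (L.mulVec x ⬝ᵥ L.mulVec x) := by
    subst h₂
    simp only [sub_dotProduct, dotProduct_sub, smul_dotProduct, dotProduct_smul, smul_eq_mul]
    rw [dotProduct_comm (L.mulVec x) y]
    field_simp
    ring
  have e3 : (1 - 4 * a * b * opNorm L ^ 2) / 4 * (a⁻¹ * (x ⬝ᵥ x) + b⁻¹ * (y ⬝ᵥ y))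
      = (4 * a)⁻¹ * (x ⬝ᵥ x) + (4 * b)⁻¹ * (y ⬝ᵥ y)
        - b * (opNorm L ^ 2 * (x ⬝ᵥ x)) - a * (opNorm L ^ 2 * (y ⬝ᵥ y)) := by
    field_simp
    ring
  have e4 : (2 * a)⁻¹ = 2 * (4 * a)⁻¹ := by field_simp; norm_num
  have e5 : (2 * b)⁻¹ = 2 * (4 * b)⁻¹ := by field_simp; norm_num
  rw [e1, e2, e3]
  unfold energy
  rw [e4, e5]
  linarith

/-- Expansion of the energy at `(u + d₁ - l d₁, w + d₂ - l d₂)`, where `(u, w)` is the error of the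
resolvent step and `(u + d₁, w + d₂)` that of the current iterate. -/
lemma energy_step (L : Matrix (Fin m) (Fin n) ℝ) (a b l : ℝ) (u d₁ v₁ : Vec n) (w d₂ v₂ : Vec m)
    (h₁ : v₁ = (2 * a)⁻¹ • d₁ - Lᵀ.mulVec d₂) (h₂ : v₂ = (2 * b)⁻¹ • d₂ - L.mulVec d₁) :
    energy L a b (u + d₁ - l • d₁) (w + d₂ - l • d₂) = energy L a b (u + d₁) (w + d₂)
      - 2 * l * (u ⬝ᵥ v₁ + w ⬝ᵥ v₂ + energy L a b d₁ d₂) + l ^ 2 * energy L a b d₁ d₂ := by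
  subst h₁ h₂
  unfold energy
  simp only [sub_dotProduct, dotProduct_sub, add_dotProduct, dotProduct_add, smul_dotProduct,
    dotProduct_smul, smul_eq_mul, mulVec_add, mulVec_sub, mulVec_smul]
  rw [dotProduct_comm d₁ u, dotProduct_comm d₂ w, dot_mulVec_comm]
  ring

/-- Fejér-type decrease of the energy along a relaxed step with parameter `(1 - 4ab‖L‖²)/4`. -/
lemma energy_decrease {L : Matrix (Fin m) (Fin n) ℝ} (hL : L ≠ 0) {a b : ℝ}
    (ha : 0 < a) (hb : 0 < b) (hab : 4 * a * b * opNorm L ^ 2 < 1) {l : ℝ}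
    (hl : l = (1 - 4 * a * b * opNorm L ^ 2) / 4) (u d₁ v₁ : Vec n) (w d₂ v₂ : Vec m)
    (h₁ : v₁ = (2 * a)⁻¹ • d₁ - Lᵀ.mulVec d₂) (h₂ : v₂ = (2 * b)⁻¹ • d₂ - L.mulVec d₁)
    (hv : -a * (v₁ ⬝ᵥ v₁) - b * (v₂ ⬝ᵥ v₂) ≤ u ⬝ᵥ v₁ + w ⬝ᵥ v₂) :
    energy L a b (u + d₁ - l • d₁) (w + d₂ - l • d₂) ≤ energy L a b (u + d₁) (w + d₂)
      - l ^ 2 * (a⁻¹ * (d₁ ⬝ᵥ d₁) + b⁻¹ * (d₂ ⬝ᵥ d₂)) := by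
  have hl0 : 0 < l := by rw [hl]; linarith
  have g1 := energy_gap hL ha hb d₁ v₁ d₂ v₂ h₁ h₂
  rw [← hl] at g1
  have g2 := mul_le_mul_of_nonneg_left (energy_le ha hb hab d₁ d₂) (sq_nonneg l)
  have g3 : l * (a⁻¹ * (d₁ ⬝ᵥ d₁) + b⁻¹ * (d₂ ⬝ᵥ d₂))
      ≤ u ⬝ᵥ v₁ + w ⬝ᵥ v₂ + energy L a b d₁ d₂ := by linarith
  have g4 := mul_le_mul_of_nonneg_left g3 hl0.le
  rw [energy_step L a b l u d₁ v₁ w d₂ v₂ h₁ h₂]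
  nlinarith

/-! ### Passage to the limit -/

lemma tendsto_zero_of_decrease {E N : ℕ → ℝ} {c : ℝ} (hc : 0 < c) (hE : ∀ k, 0 ≤ E k)
    (hN : ∀ k, 0 ≤ N k) (h : ∀ k, E (k + 1) ≤ E k - c * N k) : Tendsto N atTop (nhds 0) := by
  have hs : ∀ K, c * ∑ k ∈ Finset.range K, N k ≤ E 0 - E K := by
    intro K
    induction K with
    | zero => simp
    | succ K ih =>
      rw [Finset.sum_range_succ, mul_add]
      linarith [h K]
  refine (summable_of_sum_range_le (c := E 0 / c) hN fun K => ?_).tendsto_atTop_zero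
  rw [le_div_iff₀ hc]
  linarith [hs K, hE K]

lemma tendsto_zero_of_dot_le {d : ℕ → Vec n} {N : ℕ → ℝ} {c : ℝ} (h : ∀ k, d k ⬝ᵥ d k ≤ c * N k)
    (hN : Tendsto N atTop (nhds 0)) : Tendsto d atTop (nhds 0) := by
  rw [tendsto_pi_nhds]
  intro i
  have h0 : Tendsto (fun k => Real.sqrt (c * N k)) atTop (nhds 0) := by
    simpa using (hN.const_mul c).sqrt
  refine squeeze_zero_norm (fun k => ?_) h0
  refine Real.abs_le_sqrt (le_trans ?_ (h k))
  rw [pow_two]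
  exact Finset.single_le_sum (f := fun j => d k j * d k j)
    (fun j _ => mul_self_nonneg (d k j)) (Finset.mem_univ i)

/-- Closed graphs: if `v k ∈ T_PD (z k)` and `v k → 0`, then limit points of `z` are zeros. -/
lemma mem_zer_of_clusterPt {A : Vec n → Set (Vec n)} {B : Vec m → Set (Vec m)}
    {L : Matrix (Fin m) (Fin n) ℝ}
    (hA : IsClosed {p : Vec n × Vec n | p.2 ∈ A p.1})
    (hB : IsClosed {p : Vec m × Vec m | p.2 ∈ B p.1})
    {x v₁ : ℕ → Vec n} {y v₂ : ℕ → Vec m}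
    (hv₁ : Tendsto v₁ atTop (nhds 0)) (hv₂ : Tendsto v₂ atTop (nhds 0))
    (h₁ : ∀ k, v₁ k - Lᵀ.mulVec (y k) ∈ A (x k)) (h₂ : ∀ k, y k ∈ B (v₂ k + L.mulVec (x k)))
    {p : Vec n × Vec m} (hp : MapClusterPt p atTop (fun k => (x k, y k))) :
    p ∈ zerTPD A B L := by
  obtain ⟨φ, hφ, hlim⟩ := hp.tendsto_subseq
  have hx : Tendsto (fun k => x (φ k)) atTop (nhds p.1) := (continuous_fst.tendsto p).comp hlim
  have hy : Tendsto (fun k => y (φ k)) atTop (nhds p.2) := (continuous_snd.tendsto p).comp hlim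
  have hLy : Tendsto (fun k => Lᵀ.mulVec (y (φ k))) atTop (nhds (Lᵀ.mulVec p.2)) :=
    ((Continuous.matrix_mulVec continuous_const continuous_id).tendsto p.2).comp hy
  have hLx : Tendsto (fun k => L.mulVec (x (φ k))) atTop (nhds (L.mulVec p.1)) :=
    ((Continuous.matrix_mulVec continuous_const continuous_id).tendsto p.1).comp hx
  have ha := (hv₁.comp hφ.tendsto_atTop).sub hLy
  have hb := (hv₂.comp hφ.tendsto_atTop).add hLx
  have m1 := hA.mem_of_tendsto (hx.prodMk_nhds ha) (Eventually.of_forall fun k => h₁ (φ k))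
  have m2 := hB.mem_of_tendsto (hb.prodMk_nhds hy) (Eventually.of_forall fun k => h₂ (φ k))
  exact ⟨_, _, m1, m2, by simp⟩

end Aux

theorem cpa_convergence_semimonotone {n m : ℕ}
    (A : Vec n → Set (Vec n)) (B : Vec m → Set (Vec m))
    (L : Matrix (Fin m) (Fin n) ℝ) (hL : L ≠ 0)
    (hAclosed : IsClosed {p : Vec n × Vec n | p.2 ∈ A p.1})
    (hBclosed : IsClosed {p : Vec m × Vec m | p.2 ∈ B p.1})
    (μA μB ρA ρB : ℝ) (xs : Vec n) (ys : Vec m)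
    (hzer : (xs, ys) ∈ zerTPD A B L)
    (hgA : -(Lᵀ.mulVec ys) ∈ A xs) (hgB : ys ∈ B (L.mulVec xs))
    (hsA : SemimonotoneAt A (μA • (Lᵀ * L)) (ρA • (1 : Matrix (Fin n) (Fin n) ℝ))
      xs (-(Lᵀ.mulVec ys)))
    (hsB : SemimonotoneAt B (μB • (1 : Matrix (Fin m) (Fin m) ℝ)) (ρB • (L * Lᵀ))
      (L.mulVec xs) ys)
    (hcase : (μA = 0 ∧ μB = 0 ∧ ρA = 0 ∧ ρB = 0) ∨
      (μA + μB > 0 ∧ ρA = 0 ∧ ρB = 0) ∨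
      (ρA + ρB > 0 ∧ μA = 0 ∧ μB = 0) ∨
      (μA + μB > 0 ∧ ρA + ρB > 0 ∧
        min 0 (μA * μB / (μA + μB)) * min 0 (ρA * ρB / (ρA + ρB)) <
          1 / (4 * opNorm L ^ 2))) :
    ∃ γ : ℝ, 0 < γ ∧ ∃ τ : ℝ, 0 < τ ∧ ∃ lam : ℕ → ℝ, (∀ k, 0 < lam k) ∧
      ((∀ w, ∃ z, InResolvent γ A w z) → (∀ w, ∃ z, InResolvent τ (SetInv B) w z) →
        ∀ (x xb : ℕ → Vec n) (y yb : ℕ → Vec m), IsCPASeq A B L γ τ lam x xb y yb →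
          (∃ k, ((0 : Vec n), (0 : Vec m)) ∈ TPD A B L (xb k, yb k)) ∨
          (∀ p : Vec n × Vec m, MapClusterPt p atTop (fun k => (xb k, yb k)) →
            p ∈ zerTPD A B L)) := by
  obtain ⟨a, b, ha, hb, hab, hμ, hρ⟩ := exists_params (pow_pos (opNorm_pos hL) 2) hcase
  obtain ⟨l, hl⟩ : ∃ l, l = (1 - 4 * a * b * opNorm L ^ 2) / 4 := ⟨_, rfl⟩
  have hl0 : 0 < l := by rw [hl]; linarith
  refine ⟨2 * a, by positivity, 2 * b, by positivity, fun _ => l, fun _ => hl0, ?_⟩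
  intro _ _ x xb y yb hseq
  right
  intro p hp
  obtain ⟨d₁, hd₁⟩ : ∃ d₁ : ℕ → Vec n, ∀ k, d₁ k = x k - xb k := ⟨_, fun _ => rfl⟩
  obtain ⟨d₂, hd₂⟩ : ∃ d₂ : ℕ → Vec m, ∀ k, d₂ k = y k - yb k := ⟨_, fun _ => rfl⟩
  obtain ⟨v₁, hv₁⟩ : ∃ v₁ : ℕ → Vec n, ∀ k, v₁ k = (2 * a)⁻¹ • d₁ k - Lᵀ.mulVec (d₂ k) :=
    ⟨_, fun _ => rfl⟩
  obtain ⟨v₂, hv₂⟩ : ∃ v₂ : ℕ → Vec m, ∀ k, v₂ k = (2 * b)⁻¹ • d₂ k - L.mulVec (d₁ k) :=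
    ⟨_, fun _ => rfl⟩
  -- The resolvent steps say that `(v₁, v₂) = P d` lies in `T_PD (xb, yb)`.
  have hA : ∀ k, v₁ k - Lᵀ.mulVec (yb k) ∈ A (xb k) := by
    intro k
    obtain ⟨c, hc, he⟩ := (hseq k).1
    have : v₁ k - Lᵀ.mulVec (yb k) = c := by
      have hc' : c = (2 * a)⁻¹ • (x k - (2 * a) • Lᵀ.mulVec (y k) - xb k) := by
        rw [he, inv_smul_smul₀ (by positivity)]
      rw [hc', hv₁, hd₁, hd₂, mulVec_sub, smul_sub, smul_sub, smul_sub,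
        inv_smul_smul₀ (by positivity)]
      abel
    rwa [this]
  have hB : ∀ k, yb k ∈ B (v₂ k + L.mulVec (xb k)) := by
    intro k
    obtain ⟨c, hc, he⟩ := (hseq k).2.1
    have : v₂ k + L.mulVec (xb k) = c := by
      have hc' : c = (2 * b)⁻¹ • (y k + (2 * b) • L.mulVec ((2 : ℝ) • xb k - x k) - yb k) := by
        rw [he, inv_smul_smul₀ (by positivity)]
      rw [hc', hv₂, hd₁, hd₂, mulVec_sub, mulVec_sub, mulVec_smul, smul_sub, smul_sub, smul_add,
        inv_smul_smul₀ (by positivity), two_smul]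
      abel
    rw [this]
    exact hc
  have hminty : ∀ k, -a * (v₁ k ⬝ᵥ v₁ k) - b * (v₂ k ⬝ᵥ v₂ k)
      ≤ (xb k - xs) ⬝ᵥ v₁ k + (yb k - ys) ⬝ᵥ v₂ k := by
    intro k
    have h1 := hsA _ _ (hA k)
    have h2 := hsB _ _ (hB k)
    have e1 : v₁ k - Lᵀ.mulVec (yb k) - -(Lᵀ.mulVec ys) = v₁ k - Lᵀ.mulVec (yb k - ys) := by
      rw [mulVec_sub]
      abel
    have e2 : v₂ k + L.mulVec (xb k) - L.mulVec xs = v₂ k + L.mulVec (xb k - xs) := by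
      rw [mulVec_sub]
      abel
    rw [e1] at h1
    rw [e2] at h2
    exact weak_minty hμ hρ _ _ _ _ h1 h2
  have hdec : ∀ k, energy L a b (x (k + 1) - xs) (y (k + 1) - ys)
      ≤ energy L a b (x k - xs) (y k - ys)
        - l ^ 2 * (a⁻¹ * (d₁ k ⬝ᵥ d₁ k) + b⁻¹ * (d₂ k ⬝ᵥ d₂ k)) := by
    intro k
    have h := energy_decrease hL ha hb hab hl (xb k - xs) (d₁ k) (v₁ k) (yb k - ys) (d₂ k) (v₂ k)
      (hv₁ k) (hv₂ k) (hminty k)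
    have e1 : xb k - xs + d₁ k = x k - xs := by rw [hd₁]; abel
    have e2 : yb k - ys + d₂ k = y k - ys := by rw [hd₂]; abel
    have e3 : x (k + 1) - xs = x k - xs - l • d₁ k := by
      rw [(hseq k).2.2.1, hd₁, smul_sub, smul_sub]
      abel
    have e4 : y (k + 1) - ys = y k - ys - l • d₂ k := by
      rw [(hseq k).2.2.2, hd₂, smul_sub, smul_sub]
      abel
    rw [e1, e2] at h
    rwa [e3, e4]
  have hN0 : ∀ k, 0 ≤ a⁻¹ * (d₁ k ⬝ᵥ d₁ k) + b⁻¹ * (d₂ k ⬝ᵥ d₂ k) := fun k =>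
    add_nonneg (mul_nonneg (by positivity) (dot_nonneg _))
      (mul_nonneg (by positivity) (dot_nonneg _))
  have hN := tendsto_zero_of_decrease (pow_pos hl0 2)
    (fun k => energy_nonneg ha hb hab (x k - xs) (y k - ys)) hN0 hdec
  have hd₁0 : Tendsto d₁ atTop (nhds 0) := by
    refine tendsto_zero_of_dot_le (c := a) (fun k => ?_) hN
    rw [mul_add, mul_inv_cancel_left₀ ha.ne']
    have := mul_nonneg ha.le (mul_nonneg (inv_pos.2 hb).le (dot_nonneg (d₂ k)))
    linarith
  have hd₂0 : Tendsto d₂ atTop (nhds 0) := by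
    refine tendsto_zero_of_dot_le (c := b) (fun k => ?_) hN
    rw [mul_add, mul_inv_cancel_left₀ hb.ne']
    have := mul_nonneg hb.le (mul_nonneg (inv_pos.2 ha).le (dot_nonneg (d₁ k)))
    linarith
  have hv₁0 : Tendsto v₁ atTop (nhds 0) := by
    have hL0 : Tendsto (fun k => Lᵀ.mulVec (d₂ k)) atTop (nhds (Lᵀ.mulVec 0)) :=
      ((Continuous.matrix_mulVec continuous_const continuous_id).tendsto 0).comp hd₂0
    rw [funext hv₁]
    simpa using (hd₁0.const_smul (2 * a)⁻¹).sub hL0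
  have hv₂0 : Tendsto v₂ atTop (nhds 0) := by
    have hL0 : Tendsto (fun k => L.mulVec (d₁ k)) atTop (nhds (L.mulVec 0)) :=
      ((Continuous.matrix_mulVec continuous_const continuous_id).tendsto 0).comp hd₁0
    rw [funext hv₂]
    simpa using (hd₂0.const_smul (2 * b)⁻¹).sub hL0
  exact mem_zer_of_clusterPt hAclosed hBclosed hv₁0 hv₂0 hA hB hp
end
end

section
/- Let A : ℝⁿ ⇉ ℝⁿ, B : ℝᵐ ⇉ ℝᵐ be set-valued operators and L ∈ ℝ^{m×n} a nonzero matrix. Let β_P, β_P′, β_D, β_D′ ∈ ℝ and set V_P := β_P·Π_{ran Lᵀ} + β_P′·Π_{ker L} ∈ ℝ^{n×n} and V_D := β_D·Π_{ran L} + β_D′·Π_{ker Lᵀ} ∈ ℝ^{m×m}. Suppose the primal-dual operator T_PD has V-oblique weak Minty solutions at a nonempty set S⋆ ⊆ zer T_PD, where V is the block-diagonal matrix V_P ⊕ V_D. Define S⋆_P := {x⋆ : ∃ y⋆, (x⋆, y⋆) ∈ S⋆} and S⋆_D := {y⋆ : ∃ x⋆, (x⋆, y⋆) ∈ S⋆}.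 Then S⋆_P is a nonempty subset of zer T_P and the primal operator T_P has V_P-oblique weak Minty solutions at S⋆_P, and S⋆_D is a nonempty subset of zer T_D and the dual operator T_D has V_D-oblique weak Minty solutions at S⋆_D. -/
/-!
The inclusions `S⋆_P ⊆ zer T_P` and `S⋆_D ⊆ zer T_D` follow by eliminating `b = L x⋆`, respectively
`a = -Lᵀ y⋆`, from `0 ∈ T_PD (x⋆, y⋆)`. The graph of `T_P` is a projection of the part of the graph
of `T_PD` on which
the second component of the value vanishes: if `a ∈ A x` and `b ∈ B (L x)`, then
`(a + Lᵀ b, 0) ∈ T_PD (x, b)`. Likewise, if `-Lᵀ y ∈ A a` and `y ∈ B b`, then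
`(0, b - L a) ∈ T_PD (a, y)`. Since the preconditioner is block diagonal, the primal-dual inequality
at such points reduces to the primal, respectively dual, inequality.
-/

open Matrix Filter

noncomputable section

/-- The primal operator `T_P(x) = {a + Lᵀ b : a ∈ A x, b ∈ B (L x)}`. -/
def TP {n m : ℕ} (A : Vec n → Set (Vec n)) (B : Vec m → Set (Vec m))
    (L : Matrix (Fin m) (Fin n) ℝ) (x : Vec n) : Set (Vec n) :=
  {v | ∃ a b, a ∈ A x ∧ b ∈ B (L.mulVec x) ∧ v = a + Lᵀ.mulVec b}

/-- The dual operator `T_D(y) = {b − L a : a ∈ A⁻¹(−Lᵀ y), b ∈ B⁻¹ y}`. -/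
def TD {n m : ℕ} (A : Vec n → Set (Vec n)) (B : Vec m → Set (Vec m))
    (L : Matrix (Fin m) (Fin n) ℝ) (y : Vec m) : Set (Vec m) :=
  {v | ∃ a b, -(Lᵀ.mulVec y) ∈ A a ∧ y ∈ B b ∧ v = b - L.mulVec a}

/-- `T` has `V`-oblique weak Minty solutions at the nonempty set `S ⊆ zer T`. -/
def HasOWMS {k : ℕ} (T : Vec k → Set (Vec k)) (V : Matrix (Fin k) (Fin k) ℝ)
    (S : Set (Vec k)) : Prop :=
  S.Nonempty ∧ S ⊆ {z | (0 : Vec k) ∈ T z} ∧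
    ∀ zs ∈ S, ∀ z v, v ∈ T z → v ⬝ᵥ (z - zs) ≥ v ⬝ᵥ V.mulVec v

/-- The primal-dual operator has `(V_P ⊕ V_D)`-oblique weak Minty solutions at `S`. -/
def HasOWMSPD {n m : ℕ} (A : Vec n → Set (Vec n)) (B : Vec m → Set (Vec m))
    (L : Matrix (Fin m) (Fin n) ℝ) (VP : Matrix (Fin n) (Fin n) ℝ)
    (VD : Matrix (Fin m) (Fin m) ℝ) (S : Set (Vec n × Vec m)) : Prop :=
  S.Nonempty ∧ S ⊆ zerTPD A B L ∧
    ∀ zs ∈ S, ∀ z v, v ∈ TPD A B L z →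
      v.1 ⬝ᵥ (z.1 - zs.1) + v.2 ⬝ᵥ (z.2 - zs.2) ≥
        v.1 ⬝ᵥ VP.mulVec v.1 + v.2 ⬝ᵥ VD.mulVec v.2

/-- `P` is the matrix of the orthogonal projection onto the subspace `S`. -/
def IsOrthProjOnto {k : ℕ} (P : Matrix (Fin k) (Fin k) ℝ) (S : Submodule ℝ (Vec k)) : Prop :=
  P.IsSymm ∧ P * P = P ∧ LinearMap.range P.mulVecLin = S

theorem owms_primal_dual {n m : ℕ}
    (A : Vec n → Set (Vec n)) (B : Vec m → Set (Vec m))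
    (L : Matrix (Fin m) (Fin n) ℝ) (hL : L ≠ 0)
    (βP βP' βD βD' : ℝ)
    (PrLT PkL : Matrix (Fin n) (Fin n) ℝ) (PrL PkLT : Matrix (Fin m) (Fin m) ℝ)
    (hPrLT : IsOrthProjOnto PrLT (LinearMap.range (Lᵀ).mulVecLin))
    (hPkL : IsOrthProjOnto PkL (LinearMap.ker L.mulVecLin))
    (hPrL : IsOrthProjOnto PrL (LinearMap.range L.mulVecLin))
    (hPkLT : IsOrthProjOnto PkLT (LinearMap.ker (Lᵀ).mulVecLin))
    (S : Set (Vec n × Vec m))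
    (hOWMS : HasOWMSPD A B L (βP • PrLT + βP' • PkL) (βD • PrL + βD' • PkLT) S) :
    HasOWMS (TP A B L) (βP • PrLT + βP' • PkL) (Prod.fst '' S) ∧
    HasOWMS (TD A B L) (βD • PrL + βD' • PkLT) (Prod.snd '' S) := by
  obtain ⟨hne, hzer, hineq⟩ := hOWMS
  refine ⟨⟨hne.image _, ?_, ?_⟩, ⟨hne.image _, ?_, ?_⟩⟩
  · rintro _ ⟨zs, hs, rfl⟩
    obtain ⟨a, b, ha, hb, h⟩ := hzer hs
    obtain ⟨h1, h2⟩ := Prod.mk.inj h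
    have hbL : b = L.mulVec zs.1 := sub_eq_zero.mp h2.symm
    exact ⟨a, zs.2, ha, hbL ▸ hb, h1⟩
  · rintro _ ⟨zs, hs, rfl⟩ x v ⟨a, b, ha, hb, rfl⟩
    have h := hineq zs hs (x, b) (a + Lᵀ.mulVec b, 0) ⟨a, L.mulVec x, ha, hb, by simp⟩
    simpa only [zero_dotProduct, add_zero] using h
  · rintro _ ⟨zs, hs, rfl⟩
    obtain ⟨a, b, ha, hb, h⟩ := hzer hs
    obtain ⟨h1, h2⟩ := Prod.mk.inj h
    have haL : a = -(Lᵀ.mulVec zs.2) := eq_neg_of_add_eq_zero_left h1.symm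
    exact ⟨zs.1, b, haL ▸ ha, hb, h2⟩
  · rintro _ ⟨zs, hs, rfl⟩ y v ⟨a, b, ha, hb, rfl⟩
    have h := hineq zs hs (a, y) (0, b - L.mulVec a) ⟨-(Lᵀ.mulVec y), b, ha, hb, by simp⟩
    simpa only [zero_dotProduct, zero_add] using h
end
end

section
/- Let γ, τ > 0, let A : ℝⁿ ⇉ ℝⁿ, B : ℝᵐ ⇉ ℝᵐ be set-valued operators, let L ∈ ℝ^{m×n}, and let M be the (n+m)×(n+m) block matrix [[γ⁻¹I_n, −Lᵀ], [−L, τ⁻¹I_m]]. If x̄ ∈ J_{γA}(x − γLᵀy) and ȳ ∈ J_{τB⁻¹}(y + τL(2x̄ − x)), then M·((x,y) − (x̄,ȳ)) ∈ T_PD(x̄, ȳ); equivalently, M·(x,y) ∈ M·(x̄,ȳ) + T_PD(x̄,ȳ), so that (x̄,ȳ) is an output of the preconditioned resolvent (M + T_PD)⁻¹ applied to M·(x,y). Consequently, every Chambolle–Pock sequence with stepsizes γ, τ and relaxation parameters (λ_k) satisfies the preconditioned proximal point recursion z̄^k ∈ (M + T_PD)⁻¹(M z^k), z^{k+1} = z^k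 + λ_k(z̄^k − z^k), where z^k := (x^k, y^k) and z̄^k := (x̄^k, ȳ^k). -/
/-!
Solving the two resolvent inclusions for the increments gives `x − x̄ = γ (a + Lᵀ y)` and
`y − ȳ = τ (b − L (2x̄ − x))` with `a ∈ A x̄`, `b ∈ B⁻¹ ȳ`. Substituting these into `M (z − z̄)`
cancels the stepsizes, and the off-diagonal blocks of `M` replace `y` by `ȳ` and `2x̄ − x` by `x̄`,
leaving `(a + Lᵀ ȳ, b − L x̄)`, an element of `T_PD (x̄, ȳ)`: this is `mop_sub_mem_TPD`. The relaxation
step in the product space is the pair of the two componentwise relaxation steps.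
-/

open Matrix Filter

noncomputable section

/-- The action of the preconditioner `M = [[γ⁻¹ I, −Lᵀ], [−L, τ⁻¹ I]]` on `ℝⁿ × ℝᵐ`. -/
def Mop {n m : ℕ} (γ τ : ℝ) (L : Matrix (Fin m) (Fin n) ℝ) (p : Vec n × Vec m) :
    Vec n × Vec m :=
  (γ⁻¹ • p.1 - Lᵀ.mulVec p.2, -(L.mulVec p.1) + τ⁻¹ • p.2)

/-- One Chambolle–Pock step. The `−Lᵀ` entry of `M` turns the `Lᵀ y` of the explicit primal step into
the `Lᵀ ȳ` of `T_PD`, and its `−L` entry turns the extrapolated `L (2x̄ − x)` into `L x̄`. -/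
lemma mop_sub_mem_TPD {n m : ℕ} {γ τ : ℝ} (hγ : γ ≠ 0) (hτ : τ ≠ 0)
    {A : Vec n → Set (Vec n)} {B : Vec m → Set (Vec m)} {L : Matrix (Fin m) (Fin n) ℝ}
    {x xbar : Vec n} {y ybar : Vec m}
    (hx : InResolvent γ A (x - γ • Lᵀ.mulVec y) xbar)
    (hy : InResolvent τ (SetInv B) (y + τ • L.mulVec ((2 : ℝ) • xbar - x)) ybar) :
    Mop γ τ L ((x, y) - (xbar, ybar)) ∈ TPD A B L (xbar, ybar) := by
  obtain ⟨a, ha, hxa⟩ := hx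
  obtain ⟨b, hb, hyb⟩ := hy
  have hx' : x - xbar = γ • (a + Lᵀ.mulVec y) := by
    rw [smul_add, ← hxa]; abel
  have hy' : y - ybar = τ • (b - L.mulVec ((2 : ℝ) • xbar - x)) := by
    rw [smul_sub, ← hyb]; abel
  refine ⟨a, b, ha, hb, Prod.ext ?_ ?_⟩
  · change γ⁻¹ • (x - xbar) - Lᵀ.mulVec (y - ybar) = a + Lᵀ.mulVec ybar
    rw [hx', inv_smul_smul₀ hγ, mulVec_sub]; abel
  · change -(L.mulVec (x - xbar)) + τ⁻¹ • (y - ybar) = b - L.mulVec xbar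
    rw [hy', inv_smul_smul₀ hτ, mulVec_sub, mulVec_sub, two_smul, mulVec_add]; abel

theorem cpa_is_preconditioned_ppa {n m : ℕ} (γ τ : ℝ) (hγ : 0 < γ) (hτ : 0 < τ)
    (A : Vec n → Set (Vec n)) (B : Vec m → Set (Vec m))
    (L : Matrix (Fin m) (Fin n) ℝ) :
    (∀ (x xbar : Vec n) (y ybar : Vec m),
      InResolvent γ A (x - γ • Lᵀ.mulVec y) xbar →
      InResolvent τ (SetInv B) (y + τ • L.mulVec ((2 : ℝ) • xbar - x)) ybar →
        Mop γ τ L ((x, y) - (xbar, ybar)) ∈ TPD A B L (xbar, ybar)) ∧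
    (∀ (lam : ℕ → ℝ), (∀ k, 0 < lam k) →
      ∀ (x xb : ℕ → Vec n) (y yb : ℕ → Vec m), IsCPASeq A B L γ τ lam x xb y yb →
        ∀ k, Mop γ τ L ((x k, y k) - (xb k, yb k)) ∈ TPD A B L (xb k, yb k) ∧
          (x (k + 1), y (k + 1)) = (x k, y k) + lam k • ((xb k, yb k) - (x k, y k))) := by
  refine ⟨fun x xbar y ybar hx hy => mop_sub_mem_TPD hγ.ne' hτ.ne' hx hy, ?_⟩
  intro lam _ x xb y yb h k
  obtain ⟨hx, hy, hx_next, hy_next⟩ := h k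
  exact ⟨mop_sub_mem_TPD hγ.ne' hτ.ne' hx hy, Prod.ext hx_next hy_next⟩
end
end

section
/- Let A : ℝⁿ ⇉ ℝⁿ and B : ℝᵐ ⇉ ℝᵐ have closed graphs and let L ∈ ℝ^{m×n} be nonzero with operator norm ‖L‖ and distinct positive singular values σ_1 = ‖L‖ > σ_2 > … > σ_d > 0. Let β_P, β_P′, β_D, β_D′ ∈ ℝ and suppose there is a nonempty set S⋆ ⊆ zer T_PD such that T_PD has V-oblique weak Minty solutions at S⋆, where V := (β_P·Π_{ran Lᵀ} + β_P′·Π_{ker L}) ⊕ (β_D·Π_{ran L} + β_D′·Π_{ker Lᵀ}) (block diagonal). Define δ := 1 + min{β_Pβ_D, 0}·(‖L‖² − σ_d²), γ_min := 2·max{−β_P,0}/(δ + √(δ² − 4β_Pβ_D‖L‖²)), γ_max := (δ + √(δ² − 4β_Pβ_D‖L‖²))/(2·max{−β_D,0}·‖L‖²) (interpreted as +∞ when β_D ≥ 0), and τ_min(γ) := max{−β_D,0}·(γ + β_P)/(γ(δ − β_Pβ_D‖L‖²) + β_P) (interpreted as 0 when β_D ≥ 0). Assume min{β_P,0}·min{β_D,0}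 < 1/(4‖L‖²), min{β_P′,0}·min{β_D′,0} < 1/‖L‖², max{−β_P′,0} < γ_max, and max{−β_D′,0}·‖L‖²·γ_min < 1. Choose γ ∈ (max{γ_min, max{−β_P′,0}}, min{γ_max, 1/(max{−β_D′,0}·‖L‖²)}) (right endpoint +∞ when β_D′ ≥ 0) and τ ∈ (max{τ_min(γ), max{−β_D′,0}}, 1/(γ‖L‖²)], and assume J_{γA} and J_{τB⁻¹} are nonempty-valued everywhere. Define θ(σ) := √((β_P/(2γ) − β_D/(2τ))² + β_Pβ_D·σ²) and let η := [if γτ < 1/‖L‖²: 1 + β_P/(2γ) + β_D/(2τ) − θ(σ_d) when β_Pβ_D < 0, and 1 + β_P/(2γ) + β_D/(2τ) − θ(‖L‖) when β_Pβ_D ≥ 0; if γτ = 1/‖L‖² and d = 1: 1 + β_P/γ + β_D/τ; if γτ = 1/‖L‖² and d > 1: 1 + β_P/(2γ) + β_D/(2τ) − θ(σ_d) when β_Pβ_D < 0, 1 + β_P/(2γ) + β_D/(2τ) − θ(σ_2) when min{β_P, β_D} ≥ 0, and 1 + β_P/γ + β_D/τ otherwise], and let η′ := [+∞ if rank L = n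 and rank L = m; 1 + β_P′/γ if rank L = m and rank L < n; 1 + β_D′/τ if rank L = n and rank L < m; min{1 + β_P′/γ, 1 + β_D′/τ} if rank L < n and rank L < m]. Set η̄ := min{η, η′} and let the relaxation parameters satisfy λ_k ∈ (0, 2η̄) for all k and liminf_{k→∞} λ_k(2η̄ − λ_k) > 0. Let M := [[γ⁻¹I_n, −Lᵀ], [−L, τ⁻¹I_m]]. Then every Chambolle–Pock sequence z^k = (x^k, y^k), z̄^k = (x̄^k, ȳ^k) either reaches a point z̄^k with (0,0) ∈ T_PD(z̄^k) in finitely many iterations, or all of the following hold: (i) v̄^k := M(z^k − z̄^k) ∈ T_PD(z̄^k) for all k and v̄^k → 0; (ii) every limit point of (z̄^k)_{k∈ℕ} belongs to zer T_PD; (iii) the sequences (Π_{ran M}·z^k)_{k∈ℕ} and (Π_{ran M}·z̄^k)_{k∈ℕ} are bounded. -/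
/-!
With `M` the preconditioner and `w = z - z̄`, each step of the method gives `v̄ := M w ∈ T_PD(z̄)` and
`z⁺ = z - λ w`. Write `q(w) = ⟨w, M w⟩`. The weak Minty inequality `⟨v̄, z̄ - z⋆⟩ ≥ ⟨v̄, V v̄⟩`
together with the spectral bound `⟨M w, V M w⟩ ≥ (η̄ - 1) q(w)` (`spectral_bound`) yields
`q(z⁺ - z⋆) ≤ q(z - z⋆) - λ (2 η̄ - λ) q(w)`. Hence `q(z - z⋆)` is bounded and `q(w) → 0`. Since
`M` is positive semidefinite, Cauchy–Schwarz for `q` turns these facts into boundedness modulo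
`ker M` and `v̄ → 0`, and the closed graph of `T_PD` identifies the limit points. The second
alternative of the conclusion therefore always holds.

The spectral bound decouples along an orthonormal eigenbasis `u i` of `LᵀL` with eigenvalues `l i`
(`exists_eigen`), after writing `y = L p + y₀` with `Lᵀ y₀ = 0`. The blocks with `l i = 0` and the
component `y₀` account for `η'`. On a block with `l = σ² > 0` let `W = V M - s`, where
`s = β_P/(2γ) + β_D/(2τ)` is half the trace of `V M`; by Cayley–Hamilton
`W² = θ(σ)²`, where `θ(σ)²` stands for the radicand. Since `W` is self-adjoint for `M`, every `t`
satisfies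
`2 t M (t + W) = M (t + W)² + (t² - θ(σ)²) M`,
which is nonnegative if `t² ≥ θ(σ)²`; for `t > 0`, and in the limit for `t = 0`, this is the wanted
bound with constant `s - t` (`block_bound`). On a singular block (`γ τ σ² = 1`), `M`
has rank one and `M V M = 2 s M` (`block_bound_singular`). The definition of `η` makes one of these bounds applicable for each
singular value (`eta_block`).
-/

open Matrix Filter

noncomputable section

/-- Euclidean inner product on `ℝⁿ × ℝᵐ`. -/
def dotP {n m : ℕ} (p q : Vec n × Vec m) : ℝ := p.1 ⬝ᵥ q.1 + p.2 ⬝ᵥ q.2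

/-- `δ := 1 + [β_P β_D]_- (‖L‖² − σ_d²)`. -/
def deltaVal (βP βD ℓ σd : ℝ) : ℝ := 1 + min (βP * βD) 0 * (ℓ ^ 2 - σd ^ 2)

def discSqrt (βP βD ℓ σd : ℝ) : ℝ :=
  Real.sqrt ((deltaVal βP βD ℓ σd) ^ 2 - 4 * βP * βD * ℓ ^ 2)

/-- `γ_min`. -/
def gammaMin (βP βD ℓ σd : ℝ) : ℝ :=
  2 * max (-βP) 0 / (deltaVal βP βD ℓ σd + discSqrt βP βD ℓ σd)

/-- `γ_max` (only meaningful when `β_D < 0`; it is `+∞` otherwise). -/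
def gammaMax (βP βD ℓ σd : ℝ) : ℝ :=
  (deltaVal βP βD ℓ σd + discSqrt βP βD ℓ σd) / (2 * (-βD) * ℓ ^ 2)

/-- `τ_min(γ)`, interpreted as `0` when `β_D ≥ 0`. -/
def tauMin (βP βD ℓ σd γ : ℝ) : ℝ :=
  if 0 ≤ βD then 0
  else (-βD) * (γ + βP) / (γ * (deltaVal βP βD ℓ σd - βP * βD * ℓ ^ 2) + βP)

/-- `θ(σ)`. -/
def thetaVal (βP βD γ τ σ : ℝ) : ℝ :=
  Real.sqrt ((βP / (2 * γ) - βD / (2 * τ)) ^ 2 + βP * βD * σ ^ 2)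

/-- `η` as in the relaxation rule. -/
def etaVal (βP βD γ τ ℓ σd σ2 : ℝ) (d : ℕ) : ℝ :=
  if γ * τ < 1 / ℓ ^ 2 then
    if βP * βD < 0 then 1 + βP / (2 * γ) + βD / (2 * τ) - thetaVal βP βD γ τ σd
    else 1 + βP / (2 * γ) + βD / (2 * τ) - thetaVal βP βD γ τ ℓ
  else if d = 1 then 1 + βP / γ + βD / τ
  else if βP * βD < 0 then 1 + βP / (2 * γ) + βD / (2 * τ) - thetaVal βP βD γ τ σd
  else if 0 ≤ min βP βD then 1 + βP / (2 * γ) + βD / (2 * τ) - thetaVal βP βD γ τ σ2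
  else 1 + βP / γ + βD / τ

/-- `η̄ := min{η, η′}`, where `η′ = +∞` when `L` has full row and column rank. -/
def etaBar (η βP' βD' γ τ : ℝ) (rk n m : ℕ) : ℝ :=
  if rk = n ∧ rk = m then η
  else if rk = m then min η (1 + βP' / γ)
  else if rk = n then min η (1 + βD' / τ)
  else min η (min (1 + βP' / γ) (1 + βD' / τ))

/-! ### The action of the projections -/

lemma dot_mulVec {k l : ℕ} (C : Matrix (Fin k) (Fin l) ℝ) (a : Vec k) (b : Vec l) :
    a ⬝ᵥ C.mulVec b = Cᵀ.mulVec a ⬝ᵥ b := by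
  rw [Matrix.dotProduct_mulVec, Matrix.mulVec_transpose]

lemma eq_zero_of_rank {k l : ℕ} (C : Matrix (Fin k) (Fin l) ℝ) (h : C.rank = l) (v : Vec l)
    (hv : C.mulVec v = 0) : v = 0 := by
  have h1 := C.mulVecLin.finrank_range_add_finrank_ker
  have h2 : Module.finrank ℝ (LinearMap.range C.mulVecLin) = l := h
  have h3 : Module.finrank ℝ (LinearMap.ker C.mulVecLin) = 0 := by
    rw [h2] at h1
    simpa using h1
  rw [Submodule.finrank_eq_zero] at h3
  have h4 : v ∈ LinearMap.ker C.mulVecLin := by simpa using hv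
  simpa [h3] using h4

lemma proj_mem {k : ℕ} {P : Matrix (Fin k) (Fin k) ℝ} {S : Submodule ℝ (Vec k)}
    (h : IsOrthProjOnto P S) (v : Vec k) : P.mulVec v ∈ S := by
  rw [← h.2.2]
  exact ⟨v, rfl⟩

lemma proj_fix {k : ℕ} {P : Matrix (Fin k) (Fin k) ℝ} {S : Submodule ℝ (Vec k)}
    (h : IsOrthProjOnto P S) {v : Vec k} (hv : v ∈ S) : P.mulVec v = v := by
  rw [← h.2.2] at hv
  obtain ⟨u, rfl⟩ := hv
  simp [Matrix.mulVec_mulVec, h.2.1]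

lemma proj_dot {k : ℕ} {P : Matrix (Fin k) (Fin k) ℝ} {S : Submodule ℝ (Vec k)}
    (h : IsOrthProjOnto P S) (a b : Vec k) : a ⬝ᵥ P.mulVec b = P.mulVec a ⬝ᵥ b := by
  rw [dot_mulVec, h.1.eq]

lemma proj_zero {k : ℕ} {P : Matrix (Fin k) (Fin k) ℝ} {S : Submodule ℝ (Vec k)}
    (h : IsOrthProjOnto P S) {v : Vec k} (hv : ∀ s ∈ S, s ⬝ᵥ v = 0) : P.mulVec v = 0 := by
  have : P.mulVec v ⬝ᵥ P.mulVec v = 0 := by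
    rw [proj_dot h, hv]
    exact proj_mem h _
  exact dotProduct_self_eq_zero.mp this

/-! ### An orthonormal eigenbasis of `LᵀL` -/

/-- Orthonormality of the basis enters in the form of Parseval's identity, which is all the
decoupling needs. -/
lemma exists_eigen {n m : ℕ} (L : Matrix (Fin m) (Fin n) ℝ) :
    ∃ (u : Fin n → Vec n) (l : Fin n → ℝ),
      (∀ a b : Vec n, a ⬝ᵥ b = ∑ i, (u i ⬝ᵥ a) * (u i ⬝ᵥ b)) ∧ (∀ i, u i ≠ 0) ∧
      (∀ i, 0 ≤ l i) ∧ ∀ i, Lᵀ.mulVec (L.mulVec (u i)) = l i • u i := by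
  have hH : (Lᵀ * L).IsHermitian := by
    have := Matrix.isHermitian_conjTranspose_mul_self L
    simpa using this
  have hne : ∀ i, (WithLp.ofLp (hH.eigenvectorBasis i) : Vec n) ≠ 0 := by
    intro i h0
    have h1 := hH.eigenvectorBasis.orthonormal.ne_zero i
    apply h1
    ext j
    simpa using congrFun h0 j
  have heig : ∀ i, Lᵀ.mulVec (L.mulVec (WithLp.ofLp (hH.eigenvectorBasis i)))
      = hH.eigenvalues i • (WithLp.ofLp (hH.eigenvectorBasis i) : Vec n) := by
    intro i
    rw [Matrix.mulVec_mulVec]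
    exact hH.mulVec_eigenvectorBasis i
  refine ⟨fun i => WithLp.ofLp (hH.eigenvectorBasis i), hH.eigenvalues, ?_, hne, ?_, heig⟩
  · intro a b
    have h := hH.eigenvectorBasis.sum_inner_mul_inner (WithLp.toLp 2 a) (WithLp.toLp 2 b)
    simp only [EuclideanSpace.inner_eq_star_dotProduct, star_trivial] at h
    rw [dotProduct_comm a b, ← h]
    refine Finset.sum_congr rfl fun i _ => ?_
    rw [dotProduct_comm b]
  · intro i
    have h1 : (WithLp.ofLp (hH.eigenvectorBasis i) : Vec n) ⬝ᵥ
        Lᵀ.mulVec (L.mulVec (WithLp.ofLp (hH.eigenvectorBasis i))) ≥ 0 := by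
      rw [dot_mulVec, Matrix.transpose_transpose]
      exact Finset.sum_nonneg fun _ _ => mul_self_nonneg _
    rw [heig i, dotProduct_smul, smul_eq_mul] at h1
    have h2 : 0 < (WithLp.ofLp (hH.eigenvectorBasis i) : Vec n) ⬝ᵥ
        (WithLp.ofLp (hH.eigenvectorBasis i) : Vec n) := by
      refine lt_of_le_of_ne (Finset.sum_nonneg fun _ _ => mul_self_nonneg _) fun h => hne i ?_
      exact dotProduct_self_eq_zero.mp h.symm
    exact nonneg_of_mul_nonneg_left h1 h2

/-! ### The scalar bound on a singular block -/

/-- The form of `M` on the block of the eigenvalue `l` of `LᵀL`; the coordinates are those of `x`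
and of `p`, where `L p` is the component of `y` in the range of `L`, and `g = γ⁻¹`, `h = τ⁻¹`. -/
def blockM (g h l x c : ℝ) : ℝ := x ^ 2 * g - 2 * x * c * l + l * c ^ 2 * h

/-- The form of `M V M` on the block of the eigenvalue `l > 0`, in the coordinates of `blockM`. -/
def blockV (βP βD g h l x c : ℝ) : ℝ := βP * (x * g - c * l) ^ 2 + βD * l * (c * h - x) ^ 2

lemma blockM_nonneg {g h l : ℝ} (hg : 0 < g) (hl : 0 ≤ l) (hgh : l ≤ g * h) (x c : ℝ) :
    0 ≤ blockM g h l x c := by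
  have h1 : 0 ≤ g * blockM g h l x c := by
    have e : g * blockM g h l x c = (g * x - l * c) ^ 2 + l * (g * h - l) * c ^ 2 := by
      unfold blockM
      ring
    rw [e]
    have := mul_nonneg hl (sub_nonneg.mpr hgh)
    positivity
  exact nonneg_of_mul_nonneg_right h1 hg

/-- The Cayley–Hamilton bound, with `t` the distance of the constant to half the trace of `V M`.
The bound on `t ^ 2` is the discriminant condition `θ(√l) ≤ t`. -/
lemma block_bound {g h l βP βD t : ℝ} (hg : 0 < g) (hl : 0 ≤ l) (hgh : l ≤ g * h) (ht : 0 ≤ t)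
    (hR : (βP * g / 2 - βD * h / 2) ^ 2 + βP * βD * l ≤ t ^ 2) (x c : ℝ) :
    (βP * g / 2 + βD * h / 2 - t) * blockM g h l x c ≤ blockV βP βD g h l x c := by
  -- For `t = 0` the identity below carries no information, so `t` is replaced by `t + ε`.
  have key : ∀ t : ℝ, 0 < t → (βP * g / 2 - βD * h / 2) ^ 2 + βP * βD * l ≤ t ^ 2 →
      (βP * g / 2 + βD * h / 2 - t) * blockM g h l x c ≤ blockV βP βD g h l x c := by
    intro t ht hR
    set s := βP * g / 2 + βD * h / 2 with hs
    have e : 2 * t * (blockV βP βD g h l x c - (s - t) * blockM g h l x c)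
        = blockM g h l (βP * (x * g - c * l) + (t - s) * x) (βD * (c * h - x) + (t - s) * c)
          + (t ^ 2 - ((βP * g / 2 - βD * h / 2) ^ 2 + βP * βD * l)) * blockM g h l x c := by
      rw [hs]
      unfold blockM blockV
      ring
    have h1 := blockM_nonneg hg hl hgh (βP * (x * g - c * l) + (t - s) * x)
      (βD * (c * h - x) + (t - s) * c)
    have h2 := mul_nonneg (sub_nonneg.mpr hR) (blockM_nonneg hg hl hgh x c)
    have h3 : 0 ≤ 2 * t * (blockV βP βD g h l x c - (s - t) * blockM g h l x c) := by
      rw [e]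
      exact add_nonneg h1 h2
    have h4 := nonneg_of_mul_nonneg_right h3 (by positivity)
    linarith
  have hq := blockM_nonneg hg hl hgh x c
  refine le_of_forall_pos_le_add fun ε hε => ?_
  have hε' : 0 < ε / (blockM g h l x c + 1) := by positivity
  have h1 := key (t + ε / (blockM g h l x c + 1)) (by positivity)
    (hR.trans (pow_le_pow_left₀ ht (by linarith) 2))
  have h2 : ε / (blockM g h l x c + 1) * blockM g h l x c ≤ ε := by
    rw [div_mul_eq_mul_div, div_le_iff₀ (by positivity)]
    nlinarith
  nlinarith

lemma block_bound_singular {g h l βP βD κ : ℝ} (hg : 0 < g) (hgh : l = g * h)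
    (hκ : κ ≤ βP * g + βD * h) (x c : ℝ) :
    κ * blockM g h l x c ≤ blockV βP βD g h l x c := by
  have e1 : blockM g h l x c = g * (x - h * c) ^ 2 := by
    rw [hgh]
    unfold blockM
    ring
  have e2 : blockV βP βD g h l x c = (βP * g + βD * h) * (g * (x - h * c) ^ 2) := by
    rw [hgh]
    unfold blockV
    ring
  rw [e1, e2]
  exact mul_le_mul_of_nonneg_right hκ (by positivity)

/-- The constant given by `θ(r)` is admissible on the block `l` if the radicand at `r` is at least
that at `√l`; this holds even where the square root takes its junk value. -/
lemma block_of_theta {βP βD γ τ l r : ℝ} (hγ : 0 < γ) (hl : 0 ≤ l) (hgh : l ≤ γ⁻¹ * τ⁻¹)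
    (hr : βP * βD * l ≤ βP * βD * r ^ 2) (x c : ℝ) :
    (1 + βP / (2 * γ) + βD / (2 * τ) - thetaVal βP βD γ τ r - 1) * blockM γ⁻¹ τ⁻¹ l x c
      ≤ blockV βP βD γ⁻¹ τ⁻¹ l x c := by
  have h := block_bound (βP := βP) (βD := βD) (inv_pos.mpr hγ) hl hgh
    (Real.sqrt_nonneg ((βP / (2 * γ) - βD / (2 * τ)) ^ 2 + βP * βD * r ^ 2)) ?_ x c
  · convert h using 2
    unfold thetaVal
    field_simp
    ring
  · refine le_trans ?_ (by
      rcases le_total 0 ((βP / (2 * γ) - βD / (2 * τ)) ^ 2 + βP * βD * r ^ 2) with h | h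
      · exact (Real.sq_sqrt h).ge
      · exact h.trans (sq_nonneg _))
    have e : βP * γ⁻¹ / 2 - βD * τ⁻¹ / 2 = βP / (2 * γ) - βD / (2 * τ) := by
      field_simp
    rw [e]
    linarith

/-- The constant `η` is admissible on the block of every positive singular value `σ j`. -/
lemma eta_block {βP βD γ τ : ℝ} (hγ : 0 < γ) (hτ : 0 < τ) {d : ℕ} {σ : ℕ → ℝ}
    (hσdec : ∀ i j, 1 ≤ i → i < j → j ≤ d → σ j < σ i)
    (hσpos : ∀ i, 1 ≤ i → i ≤ d → 0 < σ i) (hub : τ ≤ 1 / (γ * σ 1 ^ 2))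
    {j : ℕ} (hj1 : 1 ≤ j) (hjd : j ≤ d) (x c : ℝ) :
    (etaVal βP βD γ τ (σ 1) (σ d) (σ 2) d - 1) * blockM γ⁻¹ τ⁻¹ (σ j ^ 2) x c
      ≤ blockV βP βD γ⁻¹ τ⁻¹ (σ j ^ 2) x c := by
  have hg : 0 < γ⁻¹ := inv_pos.mpr hγ
  have anti : ∀ i k, 1 ≤ i → i ≤ k → k ≤ d → σ k ^ 2 ≤ σ i ^ 2 := by
    intro i k hi hik hk
    refine pow_le_pow_left₀ (hσpos k (hi.trans hik) hk).le ?_ 2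
    rcases hik.eq_or_lt with rfl | h
    · exact le_rfl
    · exact (hσdec i k hi h hk).le
  have h1 : 0 < σ 1 := hσpos 1 le_rfl (hj1.trans hjd)
  have hub1 : σ 1 ^ 2 ≤ γ⁻¹ * τ⁻¹ := by
    rw [le_div_iff₀ (by positivity)] at hub
    rw [← mul_inv, ← one_div, le_div_iff₀ (by positivity)]
    linarith
  have hubj : σ j ^ 2 ≤ γ⁻¹ * τ⁻¹ := (anti 1 j le_rfl hj1 hjd).trans hub1
  have hneg : βP * βD < 0 →
      (1 + βP / (2 * γ) + βD / (2 * τ) - thetaVal βP βD γ τ (σ d) - 1)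
        * blockM γ⁻¹ τ⁻¹ (σ j ^ 2) x c ≤ blockV βP βD γ⁻¹ τ⁻¹ (σ j ^ 2) x c := fun h =>
    block_of_theta hγ (sq_nonneg _) hubj
      (mul_le_mul_of_nonpos_left (anti j d hj1 hjd le_rfl) h.le) x c
  unfold etaVal
  split_ifs with hlt hs hd1 hs hmin
  · exact hneg hs
  · exact block_of_theta hγ (sq_nonneg _) hubj
      (mul_le_mul_of_nonneg_left (anti 1 j le_rfl hj1 hjd) (not_lt.mp hs)) x c
  all_goals
    have heq : σ 1 ^ 2 = γ⁻¹ * τ⁻¹ := by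
      refine le_antisymm hub1 ?_
      rw [not_lt, div_le_iff₀ (by positivity)] at hlt
      rw [← mul_inv, ← one_div, div_le_iff₀ (by positivity)]
      linarith
  · obtain rfl : j = 1 := by omega
    exact block_bound_singular hg heq (by simp only [div_eq_mul_inv]; linarith) x c
  · exact hneg hs
  · have hP : 0 ≤ βP := hmin.trans (min_le_left _ _)
    have hD : 0 ≤ βD := hmin.trans (min_le_right _ _)
    rcases hj1.eq_or_lt with rfl | hj
    · refine block_bound_singular hg heq ?_ x c
      have h0 : 0 ≤ thetaVal βP βD γ τ (σ 2) := Real.sqrt_nonneg _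
      have e1 : βP / (2 * γ) = βP * γ⁻¹ / 2 := by field_simp
      have e2 : βD / (2 * τ) = βD * τ⁻¹ / 2 := by field_simp
      have h3 : 0 ≤ βP * γ⁻¹ := by positivity
      have h4 : 0 ≤ βD * τ⁻¹ := by positivity
      rw [e1, e2]
      linarith
    · exact block_of_theta hγ (sq_nonneg _) hubj
        (mul_le_mul_of_nonneg_left (anti 2 j (by norm_num) hj hjd) (not_lt.mp hs)) x c
  · -- Both parameters are nonpositive, and `t = -s` is the discriminant root at `σ 1`.
    have hPD : βP ≤ 0 ∧ βD ≤ 0 := by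
      rw [not_le, min_lt_iff] at hmin
      rcases hmin with h | h
      · exact ⟨h.le, by nlinarith⟩
      · exact ⟨by nlinarith, h.le⟩
    have h3 : βP * γ⁻¹ ≤ 0 := mul_nonpos_of_nonpos_of_nonneg hPD.1 hg.le
    have h4 : βD * τ⁻¹ ≤ 0 := mul_nonpos_of_nonpos_of_nonneg hPD.2 (inv_pos.mpr hτ).le
    have h := block_bound (βP := βP) (βD := βD) (t := -(βP * γ⁻¹ / 2 + βD * τ⁻¹ / 2)) hg
      (sq_nonneg (σ j)) hubj (by linarith) ?_ x c
    · convert h using 2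
      ring
    · have h5 := mul_le_mul_of_nonneg_left hubj (not_lt.mp hs)
      have e : (βP * γ⁻¹ / 2 - βD * τ⁻¹ / 2) ^ 2 + βP * βD * (γ⁻¹ * τ⁻¹)
          = (-(βP * γ⁻¹ / 2 + βD * τ⁻¹ / 2)) ^ 2 := by ring
      linarith

/-! ### The spectral bound -/

/-- `M` is positive semidefinite, and the form of `V = V_P ⊕ V_D` at `M w` dominates
`κ` times that of `M` at `w`, as soon as both hold on every block with a positive eigenvalue;
the two conditions on `κ` concern the kernels of `L` and `Lᵀ`. -/
lemma spectral_bound {n m : ℕ} (L : Matrix (Fin m) (Fin n) ℝ) {βP βP' βD βD' γ τ κ : ℝ}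
    (hγ : 0 < γ) (hτ : 0 < τ)
    {PrLT PkL : Matrix (Fin n) (Fin n) ℝ} {PrL PkLT : Matrix (Fin m) (Fin m) ℝ}
    (hPrLT : IsOrthProjOnto PrLT (LinearMap.range (Lᵀ).mulVecLin))
    (hPkL : IsOrthProjOnto PkL (LinearMap.ker L.mulVecLin))
    (hPrL : IsOrthProjOnto PrL (LinearMap.range L.mulVecLin))
    (hPkLT : IsOrthProjOnto PkLT (LinearMap.ker (Lᵀ).mulVecLin))
    (hblock : ∀ l : ℝ, 0 < l → (∃ v : Vec n, v ≠ 0 ∧ Lᵀ.mulVec (L.mulVec v) = l • v) →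
      ∀ x c, 0 ≤ blockM γ⁻¹ τ⁻¹ l x c ∧
        κ * blockM γ⁻¹ τ⁻¹ l x c ≤ blockV βP βD γ⁻¹ τ⁻¹ l x c)
    (hker : (∃ v : Vec n, v ≠ 0 ∧ L.mulVec v = 0) → κ ≤ βP' / γ)
    (hkerT : (∃ v : Vec m, v ≠ 0 ∧ Lᵀ.mulVec v = 0) → κ ≤ βD' / τ) (w : Vec n × Vec m) :
    0 ≤ dotP w (Mop γ τ L w) ∧
      κ * dotP w (Mop γ τ L w) ≤
        (Mop γ τ L w).1 ⬝ᵥ (βP • PrLT + βP' • PkL).mulVec (Mop γ τ L w).1 +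
        (Mop γ τ L w).2 ⬝ᵥ (βD • PrL + βD' • PkLT).mulVec (Mop γ τ L w).2 := by
  obtain ⟨u, l, hpars, hu0, hl0, heig⟩ := exists_eigen L
  obtain ⟨x, y⟩ := w
  obtain ⟨p, hp⟩ := proj_mem hPrL y
  simp only [Matrix.mulVecLin_apply] at hp
  obtain ⟨y0, hy0⟩ : ∃ y0, y0 = y - L.mulVec p := ⟨_, rfl⟩
  have hy : y = L.mulVec p + y0 := by rw [hy0]; abel
  have hLy0 : Lᵀ.mulVec y0 = 0 := by
    apply dotProduct_self_eq_zero.mp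
    have f : ∀ q, PrL.mulVec (L.mulVec q) = L.mulVec q := fun q => proj_fix hPrL ⟨q, rfl⟩
    rw [← dot_mulVec, dotProduct_comm, hy0, hp, dotProduct_sub, proj_dot hPrL, f, sub_self]
  have horth : ∀ q, L.mulVec q ⬝ᵥ y0 = 0 := by
    intro q
    rw [dotProduct_comm, dot_mulVec, hLy0, zero_dotProduct]
  have hLL : ∀ i q, u i ⬝ᵥ Lᵀ.mulVec (L.mulVec q) = l i * (u i ⬝ᵥ q) := by
    intro i q
    rw [dot_mulVec, Matrix.transpose_transpose, dot_mulVec, heig, smul_dotProduct, smul_eq_mul]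
  have hLdot : ∀ a b, L.mulVec a ⬝ᵥ L.mulVec b = ∑ i, l i * (u i ⬝ᵥ a) * (u i ⬝ᵥ b) := by
    intro a b
    rw [dot_mulVec, dotProduct_comm, hpars]
    refine Finset.sum_congr rfl fun i _ => ?_
    rw [hLL]
    ring
  have hv1 : (Mop γ τ L (x, y)).1 = γ⁻¹ • x - Lᵀ.mulVec (L.mulVec p) := by
    simp [Mop, hy, Matrix.mulVec_add, hLy0]
  have hv2 : (Mop γ τ L (x, y)).2 = L.mulVec (τ⁻¹ • p - x) + τ⁻¹ • y0 := by
    simp only [Mop, hy, Matrix.mulVec_sub, Matrix.mulVec_smul, smul_add]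
    abel
  have hcoord : ∀ i, u i ⬝ᵥ (γ⁻¹ • x - Lᵀ.mulVec (L.mulVec p))
      = (u i ⬝ᵥ x) * γ⁻¹ - (u i ⬝ᵥ p) * l i := by
    intro i
    rw [dotProduct_sub, hLL, dotProduct_smul, smul_eq_mul]
    ring
  have hq : dotP (x, y) (Mop γ τ L (x, y))
      = ∑ i, blockM γ⁻¹ τ⁻¹ (l i) (u i ⬝ᵥ x) (u i ⬝ᵥ p) + τ⁻¹ * (y0 ⬝ᵥ y0) := by
    have e2 : y ⬝ᵥ (L.mulVec (τ⁻¹ • p - x) + τ⁻¹ • y0)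
        = L.mulVec p ⬝ᵥ L.mulVec (τ⁻¹ • p - x) + τ⁻¹ * (y0 ⬝ᵥ y0) := by
      rw [hy, add_dotProduct, dotProduct_add, dotProduct_add, dotProduct_smul, dotProduct_smul,
        horth, dotProduct_comm y0, horth]
      simp
    unfold dotP
    rw [hv1, hv2, e2, hLdot, hpars, ← add_assoc, ← Finset.sum_add_distrib]
    congr 1
    refine Finset.sum_congr rfl fun i _ => ?_
    rw [hcoord, dotProduct_sub, dotProduct_smul, smul_eq_mul]
    unfold blockM
    ring
  have hV2 : (Mop γ τ L (x, y)).2 ⬝ᵥ (βD • PrL + βD' • PkLT).mulVec (Mop γ τ L (x, y)).2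
      = βD * ∑ i, l i * ((u i ⬝ᵥ p) * τ⁻¹ - u i ⬝ᵥ x) ^ 2 + βD' * (τ⁻¹ ^ 2 * (y0 ⬝ᵥ y0)) := by
    have f1 : PrL.mulVec (L.mulVec (τ⁻¹ • p - x)) = L.mulVec (τ⁻¹ • p - x) :=
      proj_fix hPrL ⟨_, rfl⟩
    have f2 : PrL.mulVec y0 = 0 := by
      refine proj_zero hPrL ?_
      rintro _ ⟨q, rfl⟩
      exact horth q
    have f3 : PkLT.mulVec (L.mulVec (τ⁻¹ • p - x)) = 0 := by
      refine proj_zero hPkLT fun s hs => ?_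
      rw [dot_mulVec, show Lᵀ.mulVec s = 0 from hs, zero_dotProduct]
    have f4 : PkLT.mulVec y0 = y0 := proj_fix hPkLT hLy0
    rw [hv2, Matrix.add_mulVec, Matrix.smul_mulVec, Matrix.smul_mulVec, Matrix.mulVec_add,
      Matrix.mulVec_add, Matrix.mulVec_smul, Matrix.mulVec_smul, f1, f2, f3, f4]
    simp only [dotProduct_add, add_dotProduct, dotProduct_smul, smul_dotProduct, smul_zero,
      horth, dotProduct_comm y0 (L.mulVec _), hLdot, smul_eq_mul, zero_add,
      add_zero, mul_zero]
    congr 1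
    · congr 1
      refine Finset.sum_congr rfl fun i _ => ?_
      rw [dotProduct_sub, dotProduct_smul, smul_eq_mul]
      ring
    · ring
  have hP1 : ∀ i, PrLT.mulVec (u i) = if l i = 0 then 0 else u i := by
    intro i
    split_ifs with h
    · have h1 : L.mulVec (u i) = 0 := by
        apply dotProduct_self_eq_zero.mp
        rw [dot_mulVec, heig, h, zero_smul, zero_dotProduct]
      refine proj_zero hPrLT ?_
      rintro _ ⟨q, rfl⟩
      rw [Matrix.mulVecLin_apply, ← dot_mulVec, h1, dotProduct_zero]
    · refine proj_fix hPrLT ⟨(l i)⁻¹ • L.mulVec (u i), ?_⟩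
      rw [Matrix.mulVecLin_apply, Matrix.mulVec_smul, heig, smul_smul, inv_mul_cancel₀ h, one_smul]
  have hP2 : ∀ i, PkL.mulVec (u i) = if l i = 0 then u i else 0 := by
    intro i
    split_ifs with h
    · have h1 : L.mulVec (u i) = 0 := by
        apply dotProduct_self_eq_zero.mp
        rw [dot_mulVec, heig, h, zero_smul, zero_dotProduct]
      exact proj_fix hPkL h1
    · refine proj_zero hPkL fun s hs => ?_
      have h1 : l i * (s ⬝ᵥ u i) = 0 := by
        rw [← smul_eq_mul, ← dotProduct_smul, ← heig, dot_mulVec, Matrix.transpose_transpose,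
          show L.mulVec s = 0 from hs, zero_dotProduct]
      exact (mul_eq_zero.mp h1).resolve_left h
  have hV1 : (Mop γ τ L (x, y)).1 ⬝ᵥ (βP • PrLT + βP' • PkL).mulVec (Mop γ τ L (x, y)).1
      = ∑ i, (if l i = 0 then βP' else βP) * ((u i ⬝ᵥ x) * γ⁻¹ - (u i ⬝ᵥ p) * l i) ^ 2 := by
    rw [hv1, hpars]
    refine Finset.sum_congr rfl fun i _ => ?_
    rw [Matrix.add_mulVec, Matrix.smul_mulVec, Matrix.smul_mulVec, dotProduct_add,
      dotProduct_smul, dotProduct_smul, proj_dot hPrLT, proj_dot hPkL, hP1, hP2]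
    split_ifs
    · rw [zero_dotProduct, hcoord]
      simp only [smul_eq_mul]
      ring
    · rw [zero_dotProduct, hcoord]
      simp only [smul_eq_mul]
      ring
  have hblocks : ∀ i, 0 ≤ blockM γ⁻¹ τ⁻¹ (l i) (u i ⬝ᵥ x) (u i ⬝ᵥ p) ∧
      κ * blockM γ⁻¹ τ⁻¹ (l i) (u i ⬝ᵥ x) (u i ⬝ᵥ p) ≤
        (if l i = 0 then βP' else βP) * ((u i ⬝ᵥ x) * γ⁻¹ - (u i ⬝ᵥ p) * l i) ^ 2
        + βD * (l i * ((u i ⬝ᵥ p) * τ⁻¹ - u i ⬝ᵥ x) ^ 2) := by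
    intro i
    rcases (hl0 i).eq_or_lt with h | h
    · have h1 : L.mulVec (u i) = 0 := by
        apply dotProduct_self_eq_zero.mp
        rw [dot_mulVec, heig, ← h, zero_smul, zero_dotProduct]
      have hκ := hker ⟨u i, hu0 i, h1⟩
      rw [if_pos h.symm, ← h]
      unfold blockM
      have hx : 0 ≤ (u i ⬝ᵥ x) ^ 2 * γ⁻¹ := by positivity
      have h2 := mul_le_mul_of_nonneg_right hκ hx
      rw [div_eq_mul_inv] at h2
      constructor
      · linarith
      · linarith
    · rw [if_neg h.ne']
      obtain ⟨h1, h2⟩ := hblock (l i) h ⟨u i, hu0 i, heig i⟩ (u i ⬝ᵥ x) (u i ⬝ᵥ p)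
      refine ⟨h1, h2.trans (le_of_eq ?_)⟩
      unfold blockV
      ring
  have hy00 : 0 ≤ y0 ⬝ᵥ y0 := Finset.sum_nonneg fun _ _ => mul_self_nonneg _
  constructor
  · rw [hq]
    exact add_nonneg (Finset.sum_nonneg fun i _ => (hblocks i).1)
      (mul_nonneg (inv_pos.mpr hτ).le hy00)
  · have h1 : κ * (τ⁻¹ * (y0 ⬝ᵥ y0)) ≤ βD' * (τ⁻¹ ^ 2 * (y0 ⬝ᵥ y0)) := by
      by_cases h0 : y0 = 0
      · simp [h0]
      · have hκ := hkerT ⟨y0, h0, hLy0⟩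
        have h2 := mul_le_mul_of_nonneg_right hκ (mul_nonneg (inv_pos.mpr hτ).le hy00)
        rw [div_eq_mul_inv] at h2
        linarith
    have h2 := Finset.sum_le_sum fun i (_ : i ∈ Finset.univ) => (hblocks i).2
    rw [Finset.sum_add_distrib, ← Finset.mul_sum, ← Finset.mul_sum] at h2
    rw [hq, hV1, hV2]
    linarith

/-! ### The seminorm of the preconditioner and coordinatewise criteria -/

section Bilinear

variable {n m : ℕ}

lemma dotP_comm (a b : Vec n × Vec m) : dotP a b = dotP b a := by
  simp [dotP, dotProduct_comm]

lemma dotP_add (a b c : Vec n × Vec m) : dotP a (b + c) = dotP a b + dotP a c := by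
  simp only [dotP, Prod.fst_add, Prod.snd_add, dotProduct_add]
  ring

lemma dotP_sub (a b c : Vec n × Vec m) : dotP a (b - c) = dotP a b - dotP a c := by
  simp only [dotP, Prod.fst_sub, Prod.snd_sub, dotProduct_sub]
  ring

lemma dotP_smul (r : ℝ) (a b : Vec n × Vec m) : dotP a (r • b) = r * dotP a b := by
  simp only [dotP, Prod.smul_fst, Prod.smul_snd, dotProduct_smul, smul_eq_mul]
  ring

lemma Mop_symm (γ τ : ℝ) (L : Matrix (Fin m) (Fin n) ℝ) (a b : Vec n × Vec m) :
    dotP (Mop γ τ L a) b = dotP a (Mop γ τ L b) := by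
  simp only [dotP, Mop, dotProduct_sub, sub_dotProduct, dotProduct_add, add_dotProduct,
    dotProduct_smul, smul_dotProduct, dotProduct_neg, neg_dotProduct, dot_mulVec,
    smul_eq_mul]
  rw [dotProduct_comm (Lᵀ.mulVec a.2), dot_mulVec, Matrix.transpose_transpose,
    dotProduct_comm (L.mulVec b.1)]
  ring

/-- Cauchy–Schwarz for the positive semidefinite form of the preconditioner. -/
lemma Mop_cauchy {γ τ : ℝ} {L : Matrix (Fin m) (Fin n) ℝ}
    (hpos : ∀ w, 0 ≤ dotP w (Mop γ τ L w)) (a b : Vec n × Vec m) :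
    dotP (Mop γ τ L a) b ^ 2 ≤ dotP a (Mop γ τ L a) * dotP b (Mop γ τ L b) := by
  have e : ∀ r : ℝ, dotP (a + r • b) (Mop γ τ L (a + r • b))
      = dotP b (Mop γ τ L b) * (r * r) + 2 * dotP (Mop γ τ L a) b * r
        + dotP a (Mop γ τ L a) := by
    intro r
    have e1 := Mop_symm γ τ L a (a + r • b)
    have e2 := Mop_symm γ τ L b (a + r • b)
    have e3 := Mop_symm γ τ L b a
    rw [dotP_add, dotP_smul] at e1 e2
    rw [dotP_comm, dotP_add, dotP_smul, dotP_comm _ a, dotP_comm _ b, ← e1, ← e2, e3,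
      dotP_comm b, dotP_comm (Mop γ τ L a) a, dotP_comm (Mop γ τ L b) b]
    ring
  have h := discrim_le_zero (a := dotP b (Mop γ τ L b)) (b := 2 * dotP (Mop γ τ L a) b)
    (c := dotP a (Mop γ τ L a)) fun r => by rw [← e r]; exact hpos _
  unfold discrim at h
  nlinarith

lemma dotP_single_left (z : Vec n × Vec m) (i : Fin n) : dotP z (Pi.single i 1, 0) = z.1 i := by
  simp [dotP]

lemma dotP_single_right (z : Vec n × Vec m) (i : Fin m) : dotP z (0, Pi.single i 1) = z.2 i := by
  simp [dotP]

lemma tendsto_zero_of_dotP {f : ℕ → Vec n × Vec m}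
    (h : ∀ p, Tendsto (fun k => dotP (f k) p) atTop (nhds 0)) : Tendsto f atTop (nhds 0) := by
  have h1 : Tendsto (fun k => (f k).1) atTop (nhds 0) := by
    rw [tendsto_pi_nhds]
    intro i
    simpa only [dotP_single_left, Pi.zero_apply] using h (Pi.single i 1, 0)
  have h2 : Tendsto (fun k => (f k).2) atTop (nhds 0) := by
    rw [tendsto_pi_nhds]
    intro i
    simpa only [dotP_single_right, Pi.zero_apply] using h (0, Pi.single i 1)
  exact h1.prodMk_nhds h2

lemma bounded_of_dotP {f : ℕ → Vec n × Vec m}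
    (h : ∀ p, ∃ C, ∀ k, |dotP (f k) p| ≤ C) : ∃ C : ℝ, ∀ k, ‖f k‖ ≤ C := by
  choose C hC using h
  have hC0 : ∀ p, 0 ≤ C p := fun p => (abs_nonneg _).trans (hC p 0)
  refine ⟨∑ i, C (Pi.single i 1, 0) + ∑ i, C (0, Pi.single i 1), fun k => ?_⟩
  have s1 : 0 ≤ ∑ i : Fin n, C (Pi.single i 1, 0) := Finset.sum_nonneg fun i _ => hC0 _
  have s2 : 0 ≤ ∑ i : Fin m, C (0, Pi.single i 1) := Finset.sum_nonneg fun i _ => hC0 _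
  rw [Prod.norm_def]
  refine max_le ?_ ?_
  · refine (pi_norm_le_iff_of_nonneg (by positivity)).mpr fun i => ?_
    have h1 := hC (Pi.single i 1, 0) k
    rw [dotP_single_left] at h1
    have h2 := Finset.single_le_sum (f := fun i : Fin n => C (Pi.single i 1, 0))
      (fun i _ => hC0 _) (Finset.mem_univ i)
    rw [Real.norm_eq_abs]
    linarith
  · refine (pi_norm_le_iff_of_nonneg (by positivity)).mpr fun i => ?_
    have h1 := hC (0, Pi.single i 1) k
    rw [dotP_single_right] at h1
    have h2 := Finset.single_le_sum (f := fun i : Fin m => C (0, Pi.single i 1))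
      (fun i _ => hC0 _) (Finset.mem_univ i)
    rw [Real.norm_eq_abs]
    linarith

/-- Sequences that are bounded in the seminorm of `M`, up to a shift, have bounded projections onto
the range of `M`. -/
lemma proj_bounded {γ τ : ℝ} {L : Matrix (Fin m) (Fin n) ℝ}
    (hpos : ∀ w, 0 ≤ dotP w (Mop γ τ L w)) {PM : Vec n × Vec m → Vec n × Vec m}
    (hPMsa : ∀ p q, dotP (PM p) q = dotP p (PM q))
    (hPMrange : ∀ p, ∃ q, PM p = Mop γ τ L q) {z : ℕ → Vec n × Vec m} (zs : Vec n × Vec m)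
    {K : ℝ} (hK : ∀ k, dotP (z k - zs) (Mop γ τ L (z k - zs)) ≤ K) :
    ∃ C : ℝ, ∀ k, ‖PM (z k)‖ ≤ C := by
  refine bounded_of_dotP fun p => ?_
  obtain ⟨r, hr⟩ := hPMrange p
  refine ⟨√(K * dotP r (Mop γ τ L r)) + |dotP zs (Mop γ τ L r)|, fun k => ?_⟩
  have e : dotP (PM (z k)) p = dotP (Mop γ τ L (z k - zs)) r + dotP zs (Mop γ τ L r) := by
    rw [hPMsa, hr, Mop_symm, dotP_comm (z k - zs), dotP_sub, dotP_comm _ zs, dotP_comm _ (z k)]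
    ring
  rw [e]
  refine (abs_add_le _ _).trans (add_le_add_left ?_ _)
  refine Real.abs_le_sqrt ((Mop_cauchy hpos _ _).trans ?_)
  exact mul_le_mul_of_nonneg_right (hK k) (hpos r)

/-- The primal-dual operator inherits the closed graph. -/
lemma isClosed_graph_TPD {A : Vec n → Set (Vec n)} {B : Vec m → Set (Vec m)}
    (L : Matrix (Fin m) (Fin n) ℝ)
    (hA : IsClosed {p : Vec n × Vec n | p.2 ∈ A p.1})
    (hB : IsClosed {p : Vec m × Vec m | p.2 ∈ B p.1}) :
    IsClosed {q : (Vec n × Vec m) × (Vec n × Vec m) | q.2 ∈ TPD A B L q.1} := by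
  have e : {q : (Vec n × Vec m) × (Vec n × Vec m) | q.2 ∈ TPD A B L q.1}
      = (fun q : (Vec n × Vec m) × (Vec n × Vec m) => (q.1.1, q.2.1 - Lᵀ.mulVec q.1.2)) ⁻¹'
          {p : Vec n × Vec n | p.2 ∈ A p.1} ∩
        (fun q : (Vec n × Vec m) × (Vec n × Vec m) => (q.2.2 + L.mulVec q.1.1, q.1.2)) ⁻¹'
          {p : Vec m × Vec m | p.2 ∈ B p.1} := by
    ext ⟨z, v⟩
    constructor
    · rintro ⟨a, b, ha, hb, hv⟩
      simp only at ha hb hv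
      subst hv
      exact ⟨by simpa using ha, by simpa using hb⟩
    · rintro ⟨ha, hb⟩
      exact ⟨_, _, ha, hb, by simp⟩
  rw [e]
  refine (hA.preimage ?_).inter (hB.preimage ?_)
  · fun_prop
  · fun_prop

end Bilinear

/-! ### Convergence -/

/-- The real-variable core of the Fejér argument: `a` is the squared distance to a solution, `r` the
residual and `c` the relaxation factor. -/
lemma fejer {a c r : ℕ → ℝ} (ha : ∀ k, 0 ≤ a k) (hr : ∀ k, 0 ≤ r k) (hc : ∀ k, 0 ≤ c k)
    (hstep : ∀ k, a (k + 1) ≤ a k - c k * r k) (hlim : 0 < atTop.liminf c) :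
    (∀ k, a k ≤ a 0) ∧ Tendsto r atTop (nhds 0) := by
  have hanti : Antitone a := antitone_nat_of_succ_le fun k =>
    (hstep k).trans (sub_le_self _ (mul_nonneg (hc k) (hr k)))
  refine ⟨fun k => hanti k.zero_le, ?_⟩
  have hconv := tendsto_atTop_ciInf hanti ⟨0, by rintro _ ⟨k, rfl⟩; exact ha k⟩
  have hdiff : Tendsto (fun k => a k - a (k + 1)) atTop (nhds 0) := by
    simpa using hconv.sub ((tendsto_add_atTop_iff_nat 1).mpr hconv)
  obtain ⟨ε, hε, hεc⟩ := exists_between hlim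
  have hev := eventually_lt_of_lt_liminf hεc
    (isBoundedUnder_of ⟨0, fun k => hc k⟩)
  have hdiff' : Tendsto (fun k => (a k - a (k + 1)) / ε) atTop (nhds 0) := by
    simpa using hdiff.div_const ε
  refine tendsto_of_tendsto_of_tendsto_of_le_of_le' tendsto_const_nhds hdiff'
    (Eventually.of_forall hr) ?_
  filter_upwards [hev] with k hk
  rw [le_div_iff₀ hε]
  have h1 := hstep k
  have h2 := mul_le_mul_of_nonneg_right hk.le (hr k)
  linarith


theorem cpa_convergence_owms {n m : ℕ}
    (A : Vec n → Set (Vec n)) (B : Vec m → Set (Vec m))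
    (L : Matrix (Fin m) (Fin n) ℝ) (hL : L ≠ 0)
    (hAclosed : IsClosed {p : Vec n × Vec n | p.2 ∈ A p.1})
    (hBclosed : IsClosed {p : Vec m × Vec m | p.2 ∈ B p.1})
    -- the distinct positive singular values σ 1 = ‖L‖ > σ 2 > … > σ d > 0 of L
    (d : ℕ) (hd : 1 ≤ d) (σ : ℕ → ℝ)
    (hσ1 : σ 1 = opNorm L)
    (hσdec : ∀ i j, 1 ≤ i → i < j → j ≤ d → σ j < σ i)
    (hσpos : ∀ i, 1 ≤ i → i ≤ d → 0 < σ i)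
    (hσchar : ∀ s : ℝ, 0 < s →
      ((∃ i, 1 ≤ i ∧ i ≤ d ∧ σ i = s) ↔
        ∃ x : Vec n, x ≠ 0 ∧ (Lᵀ * L).mulVec x = (s ^ 2) • x))
    (βP βP' βD βD' : ℝ)
    (PrLT PkL : Matrix (Fin n) (Fin n) ℝ) (PrL PkLT : Matrix (Fin m) (Fin m) ℝ)
    (hPrLT : IsOrthProjOnto PrLT (LinearMap.range (Lᵀ).mulVecLin))
    (hPkL : IsOrthProjOnto PkL (LinearMap.ker L.mulVecLin))
    (hPrL : IsOrthProjOnto PrL (LinearMap.range L.mulVecLin))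
    (hPkLT : IsOrthProjOnto PkLT (LinearMap.ker (Lᵀ).mulVecLin))
    (S : Set (Vec n × Vec m))
    (hOWMS : HasOWMSPD A B L (βP • PrLT + βP' • PkL) (βD • PrL + βD' • PkLT) S)
    -- the parameter conditions
    (hc1 : min βP 0 * min βD 0 < 1 / (4 * opNorm L ^ 2))
    (hc2 : min βP' 0 * min βD' 0 < 1 / opNorm L ^ 2)
    (hc3 : βD < 0 → max (-βP') 0 < gammaMax βP βD (opNorm L) (σ d))
    (hc4 : max (-βD') 0 * opNorm L ^ 2 * gammaMin βP βD (opNorm L) (σ d) < 1)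
    -- the stepsizes
    (γ τ : ℝ) (hγ0 : 0 < γ) (hτ0 : 0 < τ)
    (hγlb : max (gammaMin βP βD (opNorm L) (σ d)) (max (-βP') 0) < γ)
    (hγub : βD < 0 → γ < gammaMax βP βD (opNorm L) (σ d))
    (hγub' : βD' < 0 → γ < 1 / ((-βD') * opNorm L ^ 2))
    (hτlb : max (tauMin βP βD (opNorm L) (σ d) γ) (max (-βD') 0) < τ)
    (hτub : τ ≤ 1 / (γ * opNorm L ^ 2))
    -- the resolvents have full domain
    (hJA : ∀ w, ∃ z, InResolvent γ A w z)
    (hJB : ∀ w, ∃ z, InResolvent τ (SetInv B) w z)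
    -- the relaxation parameters
    (lam : ℕ → ℝ)
    (hlam : ∀ k, 0 < lam k ∧
      lam k < 2 * etaBar (etaVal βP βD γ τ (opNorm L) (σ d) (σ 2) d) βP' βD' γ τ L.rank n m)
    (hliminf : 0 < atTop.liminf (fun k =>
      lam k * (2 * etaBar (etaVal βP βD γ τ (opNorm L) (σ d) (σ 2) d) βP' βD' γ τ L.rank n m
        - lam k)))
    -- the orthogonal projection onto the range of the preconditioner M
    (PM : Vec n × Vec m → Vec n × Vec m)
    (hPMsa : ∀ p q, dotP (PM p) q = dotP p (PM q))
    (hPMidem : ∀ p, PM (PM p) = PM p)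
    (hPMrange : ∀ p, ∃ q, PM p = Mop γ τ L q)
    (hPMfix : ∀ q, PM (Mop γ τ L q) = Mop γ τ L q)
    -- a Chambolle–Pock sequence
    (x xb : ℕ → Vec n) (y yb : ℕ → Vec m)
    (hCPA : IsCPASeq A B L γ τ lam x xb y yb) :
    (∃ k, ((0 : Vec n), (0 : Vec m)) ∈ TPD A B L (xb k, yb k)) ∨
    ((∀ k, Mop γ τ L ((x k, y k) - (xb k, yb k)) ∈ TPD A B L (xb k, yb k)) ∧
      Tendsto (fun k => Mop γ τ L ((x k, y k) - (xb k, yb k))) atTop (nhds 0) ∧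
      (∀ p : Vec n × Vec m, MapClusterPt p atTop (fun k => (xb k, yb k)) →
        p ∈ zerTPD A B L) ∧
      (∃ C : ℝ, ∀ k, ‖PM (x k, y k)‖ ≤ C) ∧
      (∃ C : ℝ, ∀ k, ‖PM (xb k, yb k)‖ ≤ C)) := by
  right
  set η := etaVal βP βD γ τ (opNorm L) (σ d) (σ 2) d with hη
  set ηb := etaBar η βP' βD' γ τ L.rank n m with hηb
  have hb1 : ηb - 1 ≤ η - 1 := by
    rw [hηb]
    unfold etaBar
    split_ifs <;> simp
  have hb2 : (∃ v : Vec n, v ≠ 0 ∧ L.mulVec v = 0) → ηb - 1 ≤ βP' / γ := by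
    rintro ⟨v, hv0, hv⟩
    have hrk : L.rank ≠ n := fun h => hv0 (eq_zero_of_rank L h v hv)
    rw [hηb]
    unfold etaBar
    rw [if_neg fun h => hrk h.1]
    split_ifs
    · linarith [min_le_right η (1 + βP' / γ)]
    · linarith [min_le_right η (min (1 + βP' / γ) (1 + βD' / τ)),
        min_le_left (1 + βP' / γ) (1 + βD' / τ)]
  have hb3 : (∃ v : Vec m, v ≠ 0 ∧ Lᵀ.mulVec v = 0) → ηb - 1 ≤ βD' / τ := by
    rintro ⟨v, hv0, hv⟩
    have hrk : L.rank ≠ m := fun h =>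
      hv0 (eq_zero_of_rank Lᵀ ((Matrix.rank_transpose L).trans h) v hv)
    rw [hηb]
    unfold etaBar
    rw [if_neg fun h => hrk h.2, if_neg hrk]
    split_ifs
    · linarith [min_le_right η (1 + βD' / τ)]
    · linarith [min_le_right η (min (1 + βP' / γ) (1 + βD' / τ)),
        min_le_right (1 + βP' / γ) (1 + βD' / τ)]
  have hblock : ∀ l : ℝ, 0 < l → (∃ v : Vec n, v ≠ 0 ∧ Lᵀ.mulVec (L.mulVec v) = l • v) →
      ∀ x c, 0 ≤ blockM γ⁻¹ τ⁻¹ l x c ∧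
        (ηb - 1) * blockM γ⁻¹ τ⁻¹ l x c ≤ blockV βP βD γ⁻¹ τ⁻¹ l x c := by
    rintro l hl ⟨v, hv0, hv⟩ x c
    have hsq : √l ^ 2 = l := Real.sq_sqrt hl.le
    obtain ⟨j, hj1, hjd, hj⟩ := (hσchar (√l) (Real.sqrt_pos.mpr hl)).mpr
      ⟨v, hv0, by rw [← Matrix.mulVec_mulVec, hv, hsq]⟩
    have hlj : l = σ j ^ 2 := by rw [hj, hsq]
    rw [← hσ1] at hτub hη
    have hpos1 : 0 < σ 1 := hσpos 1 le_rfl hd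
    have hle : σ j ≤ σ 1 := by
      rcases hj1.eq_or_lt with rfl | h
      · exact le_rfl
      · exact (hσdec 1 j le_rfl h hjd).le
    have hlub : l ≤ γ⁻¹ * τ⁻¹ := by
      rw [hlj]
      refine (pow_le_pow_left₀ (hσpos j hj1 hjd).le hle 2).trans ?_
      rw [le_div_iff₀ (by positivity)] at hτub
      rw [← mul_inv, ← one_div, le_div_iff₀ (by positivity)]
      linarith
    have h0 := blockM_nonneg (inv_pos.mpr hγ0) hl.le hlub x c
    refine ⟨h0, (mul_le_mul_of_nonneg_right hb1 h0).trans ?_⟩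
    rw [hη, hlj]
    exact eta_block hγ0 hτ0 hσdec hσpos hτub hj1 hjd x c
  have hspec := spectral_bound L hγ0 hτ0 hPrLT hPkL hPrL hPkLT hblock hb2 hb3
  have hpos := fun w => (hspec w).1
  obtain ⟨⟨zs, hzs⟩, -, hminty⟩ := hOWMS
  have hv : ∀ k, Mop γ τ L ((x k, y k) - (xb k, yb k)) ∈ TPD A B L (xb k, yb k) := by
    intro k
    obtain ⟨⟨a, ha, hae⟩, ⟨b, hb, hbe⟩, -, -⟩ := hCPA k
    have ea : a = γ⁻¹ • (x k - γ • Lᵀ.mulVec (y k) - xb k) := by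
      rw [hae, smul_smul, inv_mul_cancel₀ hγ0.ne', one_smul]
    have eb : b = τ⁻¹ • (y k + τ • L.mulVec ((2 : ℝ) • xb k - x k) - yb k) := by
      rw [hbe, smul_smul, inv_mul_cancel₀ hτ0.ne', one_smul]
    refine ⟨a, b, ha, hb, ?_⟩
    rw [ea, eb]
    simp only [Mop, Prod.mk_sub_mk, smul_add, smul_sub, smul_smul, inv_mul_cancel₀ hγ0.ne',
      inv_mul_cancel₀ hτ0.ne', one_smul, Matrix.mulVec_sub, two_smul,
      Matrix.mulVec_add]
    congr 1 <;> abel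
  set z : ℕ → Vec n × Vec m := fun k => (x k, y k) with hz
  set zb : ℕ → Vec n × Vec m := fun k => (xb k, yb k) with hzb
  have hnext : ∀ k, z (k + 1) - zs = (z k - zs) - lam k • (z k - zb k) := by
    intro k
    obtain ⟨-, -, h1, h2⟩ := hCPA k
    have e : z (k + 1) = z k + lam k • (zb k - z k) := by
      simp only [hz, hzb, h1, h2]
      rfl
    rw [e, smul_sub, smul_sub]
    abel
  have hMadd : ∀ (r : ℝ) (a b : Vec n × Vec m),
      dotP (a - r • b) (Mop γ τ L (a - r • b)) = dotP a (Mop γ τ L a)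
        - 2 * r * dotP a (Mop γ τ L b) + r ^ 2 * dotP b (Mop γ τ L b) := by
    intro r a b
    have e1 := Mop_symm γ τ L a (a - r • b)
    have e2 := Mop_symm γ τ L b (a - r • b)
    rw [dotP_sub, dotP_smul] at e1 e2
    rw [dotP_comm, dotP_sub, dotP_smul, dotP_comm _ a, dotP_comm _ b, ← e1, ← e2,
      Mop_symm γ τ L a a, Mop_symm γ τ L a b, Mop_symm γ τ L b b, dotP_comm (Mop γ τ L b) a]
    ring
  have hstep : ∀ k, dotP (z (k + 1) - zs) (Mop γ τ L (z (k + 1) - zs)) ≤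
      dotP (z k - zs) (Mop γ τ L (z k - zs))
        - lam k * (2 * ηb - lam k) * dotP (z k - zb k) (Mop γ τ L (z k - zb k)) := by
    intro k
    have h1 := (hspec (z k - zb k)).2
    have h2 := hminty zs hzs _ _ (hv k)
    have h3 : dotP (z k - zs) (Mop γ τ L (z k - zb k))
        = dotP (z k - zb k) (Mop γ τ L (z k - zb k))
          + dotP (Mop γ τ L (z k - zb k)) (zb k - zs) := by
      rw [dotP_comm (z k - zs), dotP_comm (z k - zb k), ← dotP_add]
      congr 1
      abel
    have h4 : dotP (Mop γ τ L (z k - zb k)) (zb k - zs) ≥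
        (ηb - 1) * dotP (z k - zb k) (Mop γ τ L (z k - zb k)) := h1.trans h2
    rw [hnext, hMadd, h3]
    have h5 := mul_le_mul_of_nonneg_left h4 (hlam k).1.le
    linarith
  obtain ⟨hbd, hres⟩ := fejer (fun k => hpos (z k - zs)) (fun k => hpos (z k - zb k))
    (fun k => (mul_pos (hlam k).1 (sub_pos.mpr (hlam k).2)).le) hstep hliminf
  have hv0 : Tendsto (fun k => Mop γ τ L (z k - zb k)) atTop (nhds 0) := by
    refine tendsto_zero_of_dotP fun p => ?_
    have h1 : Tendsto (fun k => √(dotP (z k - zb k) (Mop γ τ L (z k - zb k))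
        * dotP p (Mop γ τ L p))) atTop (nhds 0) := by
      simpa using (hres.mul_const (dotP p (Mop γ τ L p))).sqrt
    exact squeeze_zero_norm (fun k => Real.abs_le_sqrt (Mop_cauchy hpos _ _)) h1
  obtain ⟨K, hK⟩ := hres.bddAbove_range
  refine ⟨hv, hv0, ?_, proj_bounded hpos hPMsa hPMrange zs hbd,
    proj_bounded (z := zb) hpos hPMsa hPMrange zs
      (K := 2 * dotP (z 0 - zs) (Mop γ τ L (z 0 - zs)) + 2 * K) fun k => ?_⟩
  · intro p hp
    obtain ⟨φ, hφ, hφp⟩ := hp.tendsto_subseq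
    exact (isClosed_graph_TPD L hAclosed hBclosed).mem_of_tendsto
      (hφp.prodMk_nhds (hv0.comp hφ.tendsto_atTop)) (Eventually.of_forall fun k => hv (φ k))
  · -- The parallelogram inequality for `z̄ - z⋆ = (z - z⋆) - (z - z̄)`.
    have e1 := hMadd 1 (z k - zs) (z k - zb k)
    have e2 := hMadd (-1) (z k - zs) (z k - zb k)
    have e3 : zb k - zs = (z k - zs) - (1 : ℝ) • (z k - zb k) := by
      rw [one_smul]
      abel
    have h1 := hpos ((z k - zs) - (-1 : ℝ) • (z k - zb k))
    have h2 := hK ⟨k, rfl⟩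
    have h3 := hbd k
    rw [e3]
    simp only at h2 h3
    linarith
end
end

section
/- Let M, R ∈ ℝ^{n×n} be symmetric matrices with M negative definite, R negative definite, and M ⪯ (1/4)·R⁻¹ (i.e., (1/4)R⁻¹ − M is positive semidefinite). Then every set-valued operator A : ℝⁿ ⇉ ℝⁿ is (M,R)-semimonotone, i.e., for all (x,y), (x̄,ȳ) ∈ graph A it holds that ⟨x−x̄, y−ȳ⟩ ≥ ⟨x−x̄, M(x−x̄)⟩ + ⟨y−ȳ, R(y−ȳ)⟩. -/
/-!
With `u = x - xb`, `v = y - yb` and `w = R⁻¹ u`, the bound `M ⪯ (1/4) R⁻¹` gives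
`⟨u, M u⟩ ≤ (1/4) ⟨u, w⟩`, so it suffices that `⟨u, v⟩ - ⟨v, R v⟩ - (1/4) ⟨u, w⟩ ≥ 0`.
Completing the square, this quantity is `⟨v - w/2, (-R) (v - w/2)⟩`, which is nonnegative because
`-R` is positive definite. The inequality holds for all vectors `u`, `v`, so the graph of `A` plays
no role.
-/

open Matrix

noncomputable section

theorem all_operators_semimonotone {n : ℕ} (M R : Matrix (Fin n) (Fin n) ℝ)
    (hMsymm : M.IsSymm) (hRsymm : R.IsSymm)
    (hMneg : (-M).PosDef) (hRneg : (-R).PosDef)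
    (hMR : ((1 / 4 : ℝ) • R⁻¹ - M).PosSemidef)
    (A : Vec n → Set (Vec n)) :
    ∀ xb yb, yb ∈ A xb → SemimonotoneAt A M R xb yb := by
  intro xb yb _ x y _
  generalize x - xb = u
  generalize y - yb = v
  -- `R⁻¹` is a genuine inverse, since `-R` is positive definite.
  have hdet : IsUnit R.det := (Matrix.isUnit_iff_isUnit_det R).1 (by simpa using hRneg.isUnit)
  obtain ⟨w, hw⟩ : ∃ w, w = R⁻¹ *ᵥ u := ⟨_, rfl⟩
  have hRw : R *ᵥ w = u := by
    rw [hw, Matrix.mulVec_mulVec, Matrix.mul_nonsing_inv R hdet, Matrix.one_mulVec]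
  have hM := hMR.dotProduct_mulVec_nonneg u
  have hS := hRneg.posSemidef.dotProduct_mulVec_nonneg (v - (1 / 2 : ℝ) • w)
  have hcross : w ⬝ᵥ R *ᵥ v = u ⬝ᵥ v := by
    rw [Matrix.dotProduct_mulVec, ← Matrix.mulVec_transpose, hRsymm.eq, hRw]
  simp only [star_trivial, Matrix.sub_mulVec, Matrix.smul_mulVec, ← hw, dotProduct_sub,
    dotProduct_smul, smul_eq_mul] at hM
  simp only [star_trivial, Matrix.neg_mulVec, Matrix.mulVec_sub, Matrix.mulVec_smul, hRw,
    dotProduct_neg, dotProduct_sub, sub_dotProduct, smul_dotProduct, dotProduct_smul,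
    smul_eq_mul, hcross, dotProduct_comm v u, dotProduct_comm w u] at hS
  linarith
end
end

section
/- Let M, R ∈ ℝ^{n×n} be symmetric, let A : ℝⁿ ⇉ ℝⁿ be (M,R)-semimonotone at (x̄, ȳ) ∈ graph A, let α > 0 and u, w ∈ ℝⁿ. Define the operator T : ℝⁿ ⇉ ℝⁿ by T(x) := {w + α·y : y ∈ A(x + u)}. Then (x̄ − u, w + α·ȳ) ∈ graph T and T is (α·M, α⁻¹·R)-semimonotone at (x̄ − u, w + α·ȳ). -/
open Matrix

noncomputable section

theorem semimonotone_shift_scale {n : ℕ} (M R : Matrix (Fin n) (Fin n) ℝ)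
    (hMsymm : M.IsSymm) (hRsymm : R.IsSymm)
    (A : Vec n → Set (Vec n)) (xb yb : Vec n) (hgraph : yb ∈ A xb)
    (hsemi : SemimonotoneAt A M R xb yb)
    (α : ℝ) (hα : 0 < α) (u w : Vec n) :
    (w + α • yb) ∈ (fun x => {v | ∃ y ∈ A (x + u), v = w + α • y}) (xb - u) ∧
    SemimonotoneAt (fun x => {v | ∃ y ∈ A (x + u), v = w + α • y})
      (α • M) (α⁻¹ • R) (xb - u) (w + α • yb) := by
  refine ⟨⟨yb, by simpa using hgraph, rfl⟩, ?_⟩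
  rintro x _ ⟨y, hy, rfl⟩
  have h := hsemi (x + u) y hy
  have e1 : x - (xb - u) = x + u - xb := by abel
  have e2 : w + α • y - (w + α • yb) = α • (y - yb) := by
    rw [add_sub_add_left_eq_sub, smul_sub]
  rw [e1, e2]
  simp only [Matrix.smul_mulVec, Matrix.mulVec_smul, dotProduct_smul, smul_dotProduct,
    smul_eq_mul]
  -- The `R` term carries the factor `α * α⁻¹ * α = α`, so the claim is `α` times `h`.
  rw [inv_mul_cancel_left₀ hα.ne', ← mul_add]
  exact mul_le_mul_of_nonneg_left h hα.le
end
end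

section
/- Let D ∈ ℝ^{m×n}, let Y ∈ ℝ^{n×n} be symmetric, and let P ∈ ℝ^{n×n} be the matrix of the orthogonal projection onto ker D. Then there exists a symmetric matrix X ∈ ℝ^{m×m} with DᵀXD ⪯ Y (i.e., Y − DᵀXD positive semidefinite) if and only if P·Y·P is positive semidefinite and rank(P·Y·P) = rank(P·Y). -/
/-!
Write `Q = 1 - P`, the orthogonal projection onto `(ker D)ᗮ`, so that `D * P = 0`.

If `Z = Y - Dᵀ * X * D` is positive semidefinite, then `P * Y = P * Z`, and `Z = Bᵀ * B` gives
`rank (P * Z * P) = rank ((B * P)ᵀ * (B * P)) = rank (B * P)ᵀ ≥ rank ((B * P)ᵀ * B) = rank (P * Z)`.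

Conversely, put `M = P * Y * P`. The rank condition says that `M` and `P * Y` have the same column
space, so `P * Y = M * K` for some `K`. Completing the square,
`(P + K * Q)ᵀ * M * (P + K * Q) = Y - Q * (Y - Kᵀ * M * K) * Q`, and the left side is positive
semidefinite. Since `ker D ≤ ker Q`, there is `E` with `Q = E * D`, so the subtracted term has the
form `Dᵀ * X * D` with `X = Eᵀ * (Y - Kᵀ * M * K) * E`. Both `K` and `E` come from a generalized
inverse (`exists_generalized_inverse`).
-/

open Matrix

noncomputable section

/-- Every real matrix has a generalized (inner) inverse. -/
lemma exists_generalized_inverse {m n : ℕ} (A : Matrix (Fin m) (Fin n) ℝ) :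
    ∃ G : Matrix (Fin n) (Fin m) ℝ, A * G * A = A := by
  obtain ⟨g, hg⟩ := A.mulVecLin.rangeRestrict.exists_rightInverse_of_surjective
    A.mulVecLin.range_rangeRestrict
  obtain ⟨h, hh⟩ := LinearMap.exists_extend g
  refine ⟨LinearMap.toMatrix' h, ?_⟩
  refine Matrix.ext_of_mulVec_single fun i => ?_
  set x : Fin n → ℝ := Pi.single i 1
  rw [← mulVec_mulVec, ← mulVec_mulVec, LinearMap.toMatrix'_mulVec]
  have h1 : h (A *ᵥ x) = g (A.mulVecLin.rangeRestrict x) :=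
    LinearMap.congr_fun hh (A.mulVecLin.rangeRestrict x)
  have h2 := congrArg Subtype.val (LinearMap.congr_fun hg (A.mulVecLin.rangeRestrict x))
  rw [h1]
  simpa using h2

/-- If the product `A * C` has the same rank as `A`, it has the same column space, so `A` is a right
multiple of `A * C`. -/
lemma exists_eq_mul_of_rank_mul_eq {l m n : ℕ} (A : Matrix (Fin l) (Fin m) ℝ)
    (C : Matrix (Fin m) (Fin n) ℝ) (h : (A * C).rank = A.rank) :
    ∃ K : Matrix (Fin n) (Fin m) ℝ, A = A * C * K := by
  obtain ⟨G, hG⟩ := exists_generalized_inverse (A * C)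
  have hle : LinearMap.range (A * C).mulVecLin ≤ LinearMap.range A.mulVecLin := by
    rw [mulVecLin_mul]
    exact LinearMap.range_comp_le_range _ _
  have heq := Submodule.eq_of_le_of_finrank_eq hle h
  refine ⟨G * A, Matrix.ext_of_mulVec_single fun i => ?_⟩
  obtain ⟨y, hy⟩ : A *ᵥ Pi.single i 1 ∈ LinearMap.range (A * C).mulVecLin := by
    rw [heq]
    exact ⟨_, rfl⟩
  rw [mulVecLin_apply] at hy
  rw [← Matrix.mul_assoc, ← mulVec_mulVec, ← hy, mulVec_mulVec, hG]

lemma rank_mul_mul_eq_of_posSemidef {n : ℕ} {P Z : Matrix (Fin n) (Fin n) ℝ} (hP : Pᵀ = P)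
    (hZ : Z.PosSemidef) : (P * Z * P).rank = (P * Z).rank := by
  refine le_antisymm (rank_mul_le_left _ _) ?_
  obtain ⟨B, rfl⟩ : ∃ B : Matrix (Fin n) (Fin n) ℝ, Z = Bᵀ * B := by
    open scoped MatrixOrder Matrix.Norms.L2Operator in
    exact CStarAlgebra.nonneg_iff_eq_star_mul_self.mp hZ.nonneg
  have h1 : P * (Bᵀ * B) * P = (B * P)ᵀ * (B * P) := by
    simp only [transpose_mul, hP, Matrix.mul_assoc]
  have h2 : P * (Bᵀ * B) = (B * P)ᵀ * B := by
    simp only [transpose_mul, hP, Matrix.mul_assoc]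
  rw [h1, h2, rank_transpose_mul_self, ← rank_transpose (B * P)]
  exact rank_mul_le_left _ _

theorem lmi_solvable_iff {m n : ℕ} (D : Matrix (Fin m) (Fin n) ℝ)
    (Y : Matrix (Fin n) (Fin n) ℝ) (hY : Y.IsSymm)
    (P : Matrix (Fin n) (Fin n) ℝ)
    (hP : IsOrthProjOnto P (LinearMap.ker D.mulVecLin)) :
    (∃ X : Matrix (Fin m) (Fin m) ℝ, X.IsSymm ∧ (Y - Dᵀ * X * D).PosSemidef) ↔
      ((P * Y * P).PosSemidef ∧ (P * Y * P).rank = (P * Y).rank) := by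
  obtain ⟨hPs, hPP, hPr⟩ := hP
  have hPt : Pᵀ = P := hPs
  have hYt : Yᵀ = Y := hY
  have hDP : D * P = 0 := by
    refine Matrix.ext_of_mulVec_single fun i => ?_
    have : P *ᵥ Pi.single i 1 ∈ LinearMap.ker D.mulVecLin := hPr ▸ ⟨_, rfl⟩
    rw [← mulVec_mulVec, zero_mulVec]
    simpa using this
  have hPD : P * Dᵀ = 0 := by
    rw [← hPt, ← transpose_mul, hDP, transpose_zero]
  constructor
  · rintro ⟨X, -, hZ⟩
    have hPZ : P * (Y - Dᵀ * X * D) = P * Y := by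
      rw [Matrix.mul_sub, ← Matrix.mul_assoc, ← Matrix.mul_assoc, hPD]
      simp
    rw [← hPZ]
    refine ⟨?_, rank_mul_mul_eq_of_posSemidef hPt hZ⟩
    have := hZ.conjTranspose_mul_mul_same P
    rwa [conjTranspose_eq_transpose_of_trivial, hPt] at this
  · rintro ⟨hM, hr⟩
    obtain ⟨K, hK⟩ := exists_eq_mul_of_rank_mul_eq (P * Y) P hr
    obtain ⟨G, hG⟩ := exists_generalized_inverse D
    -- `1 - G * D` maps into `ker D`, the range of `P`, so `1 - P` kills it.
    have hQ : 1 - P = (1 - P) * G * D := by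
      have h0 : P * (1 - G * D) = 1 - G * D := by
        refine Matrix.ext_of_mulVec_single fun i => ?_
        obtain ⟨y, hy⟩ : (1 - G * D) *ᵥ Pi.single i 1 ∈ LinearMap.range P.mulVecLin := by
          rw [hPr, LinearMap.mem_ker, mulVecLin_apply, mulVec_mulVec, Matrix.mul_sub,
            ← Matrix.mul_assoc, hG, Matrix.mul_one, sub_self, zero_mulVec]
        rw [mulVecLin_apply] at hy
        rw [← mulVec_mulVec, ← hy, mulVec_mulVec, hPP]
      rw [Matrix.mul_assoc, Matrix.sub_mul, Matrix.one_mul]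
      rw [Matrix.mul_sub, Matrix.mul_one] at h0
      linear_combination (norm := abel) -h0
    set M := P * Y * P with hMdef
    have hMt : Mᵀ = M := by simp only [hMdef, transpose_mul, hPt, hYt, Matrix.mul_assoc]
    set W := Y - Kᵀ * M * K with hW
    have hWt : Wᵀ = W := by
      simp only [hW, transpose_sub, transpose_mul, transpose_transpose, hMt, hYt, Matrix.mul_assoc]
    set E := (1 - P) * G with hE
    refine ⟨Eᵀ * W * E, ?_, ?_⟩
    · simp only [IsSymm, transpose_mul, transpose_transpose, hWt, Matrix.mul_assoc]
    · have hPM : P * M = M := by simp only [hMdef, ← Matrix.mul_assoc, hPP]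
      have hMP : M * P = M := by simp only [hMdef, Matrix.mul_assoc, hPP]
      have hK' : Kᵀ * M = Y * P := by
        have := congrArg transpose hK
        simpa only [transpose_mul, hMt, hPt, hYt] using this.symm
      have hQt : (1 - P)ᵀ = 1 - P := by rw [transpose_sub, transpose_one, hPt]
      have hkey : Y - Dᵀ * (Eᵀ * W * E) * D = (P + K * (1 - P))ᵀ * M * (P + K * (1 - P)) := by
        have h1 : Dᵀ * (Eᵀ * W * E) * D = (1 - P) * W * (1 - P) := by
          calc Dᵀ * (Eᵀ * W * E) * D = (E * D)ᵀ * W * (E * D) := by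
                simp only [transpose_mul, Matrix.mul_assoc]
            _ = _ := by rw [← hQ, hQt]
        have h2 : (P + K * (1 - P))ᵀ * M * (P + K * (1 - P))
            = P * M * P + P * (M * K) * (1 - P) + (1 - P) * (Kᵀ * M) * P
              + (1 - P) * (Kᵀ * M * K) * (1 - P) := by
          rw [transpose_add, transpose_mul, hPt, hQt]
          noncomm_ring
        have h3 : P * (P * Y) = P * Y := by rw [← Matrix.mul_assoc, hPP]
        have h4 : Y * P * P = Y * P := by rw [Matrix.mul_assoc, hPP]
        rw [h1, h2, hPM, hMP, ← hK, h3, hK', hW, hK', Matrix.mul_assoc (1 - P) (Y * P) P, h4, hMdef]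
        noncomm_ring
      rw [hkey, ← conjTranspose_eq_transpose_of_trivial]
      exact hM.conjTranspose_mul_mul_same _
end
end

section
/- Let D ∈ ℝ^{n×n}, let M ∈ ℝ^{n×n} be symmetric, and let P ∈ ℝ^{n×n} be the matrix of the orthogonal projection onto ker D. Then there exists a symmetric matrix R ∈ ℝ^{n×n} such that D (regarded as the operator x ↦ {Dx}) is (M,R)-semimonotone if and only if P·M·P is negative semidefinite and rank(P·M·P) = rank(P·((1/2)D − M)). -/
/-!
Put `Q = (D + Dᵀ)/2 - M`, so that the operator is `(M,R)`-semimonotone iff `Q - DᵀRD` is positive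
semidefinite. Since `D P = 0` and `P Dᵀ = 0`, one has `P Q P = -P M P` and `P Q = P (D/2 - M)`, so
the claim is that `Q - DᵀRD ⪰ 0` is solvable in `R` iff `P Q P ⪰ 0` and
`rank (P Q P) = rank (P Q)`.

If `S = Q - DᵀRD ⪰ 0`, then `P S = P Q`, and `rank (P S P) = rank (P S)` follows from a
factorization `S = BᵀB` (`rank_compress_eq`).

Conversely, equality of ranks forces equality of the ranges of `P Q P` and `P Q`, hence
`P Q P X = P Q` for some `X` (`exists_mul_eq_of_rank_eq`). With `Y = 1 - P`, completing the square
gives `Q - Y (Q - XᵀPQPX) Y = (P + X Y)ᵀ (P Q P) (P + X Y) ⪰ 0`. As `ker D = range P = ker Y`,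
there is `E` with `E D = Y` (`exists_mul_eq_of_ker_le`), so `R = Eᵀ (Q - XᵀPQPX) E` works.
-/

open Matrix

noncomputable section

/-- The matrix form of semimonotonicity for a single-valued linear operator. -/
lemma semimonotone_iff_posSemidef {n : ℕ} (D M R : Matrix (Fin n) (Fin n) ℝ)
    (hM : M.IsSymm) (hR : R.IsSymm) :
    (∀ xb : Vec n, SemimonotoneAt (fun x => ({D.mulVec x} : Set (Vec n))) M R
        xb (D.mulVec xb)) ↔
      ((1 / 2 : ℝ) • (D + Dᵀ) - M - Dᵀ * R * D).PosSemidef := by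
  have key : ∀ x : Vec n, x ⬝ᵥ ((1 / 2 : ℝ) • (D + Dᵀ) - M - Dᵀ * R * D) *ᵥ x =
      x ⬝ᵥ D *ᵥ x - (x ⬝ᵥ M *ᵥ x + (D *ᵥ x) ⬝ᵥ R *ᵥ (D *ᵥ x)) := by
    intro x
    have h1 : x ⬝ᵥ Dᵀ *ᵥ x = x ⬝ᵥ D *ᵥ x := by
      rw [mulVec_transpose, dotProduct_comm, ← dotProduct_mulVec]
    have h2 : x ⬝ᵥ (Dᵀ * R * D) *ᵥ x = (D *ᵥ x) ⬝ᵥ R *ᵥ (D *ᵥ x) := by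
      rw [← mulVec_mulVec, ← mulVec_mulVec, mulVec_transpose, dotProduct_comm,
        ← dotProduct_mulVec, dotProduct_comm]
    rw [sub_mulVec, sub_mulVec, smul_mulVec, add_mulVec, dotProduct_sub, dotProduct_sub,
      dotProduct_smul, dotProduct_add, h1, h2, smul_eq_mul]
    ring
  constructor
  · intro h
    refine .of_dotProduct_mulVec_nonneg ?_ fun x => ?_
    · rw [IsHermitian, conjTranspose_eq_transpose_of_trivial]
      simp only [transpose_sub, transpose_smul, transpose_add, transpose_mul, transpose_transpose,
        hM.eq, hR.eq, add_comm Dᵀ D, Matrix.mul_assoc]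
    · have := h 0 x (D *ᵥ x) rfl
      simp only [mulVec_zero, sub_zero] at this
      rw [star_trivial, key]
      linarith
  · intro h xb x y hy
    obtain rfl : y = D *ᵥ x := hy
    have := h.dotProduct_mulVec_nonneg (x - xb)
    rw [star_trivial, key] at this
    rw [← mulVec_sub]
    linarith

open scoped MatrixOrder Matrix.Norms.L2Operator in
/-- For positive semidefinite `S`, right multiplication by `P` does not lower the rank of `P S`:
with `S = BᵀB`, `P S P` is a Gram matrix of rank `rank (B P)`, which bounds `rank ((B P)ᵀ B)`. -/
lemma rank_compress_eq {n : ℕ} {S P : Matrix (Fin n) (Fin n) ℝ} (hS : S.PosSemidef)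
    (hP : P.IsSymm) : (P * S * P).rank = (P * S).rank := by
  obtain ⟨B, rfl⟩ := CStarAlgebra.nonneg_iff_eq_star_mul_self.mp hS.nonneg
  rw [star_eq_conjTranspose, conjTranspose_eq_transpose_of_trivial]
  refine le_antisymm (rank_mul_le_left _ _) ?_
  have h1 : P * (Bᵀ * B) * P = (B * P)ᵀ * (B * P) := by
    simp only [transpose_mul, hP.eq, Matrix.mul_assoc]
  have h2 : P * (Bᵀ * B) = (B * P)ᵀ * B := by
    simp only [transpose_mul, hP.eq, Matrix.mul_assoc]
  rw [h1, rank_transpose_mul_self, h2, ← rank_transpose (B * P)]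
  exact rank_mul_le_left _ _

/-- If `A` and `A C` have the same rank, they have the same range, so `A` factors through `A C`. -/
lemma exists_mul_eq_of_rank_eq {n : ℕ} (A C : Matrix (Fin n) (Fin n) ℝ)
    (h : (A * C).rank = A.rank) : ∃ X : Matrix (Fin n) (Fin n) ℝ, A * C * X = A := by
  have hr : LinearMap.range (A * C).mulVecLin = LinearMap.range A.mulVecLin := by
    refine Submodule.eq_of_le_of_finrank_eq ?_ h
    rw [Matrix.mulVecLin_mul]
    exact LinearMap.range_comp_le_range _ _
  have hx : ∀ j, ∃ v, (A * C) *ᵥ v = A.col j := by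
    intro j
    have : A *ᵥ Pi.single j 1 ∈ LinearMap.range (A * C).mulVecLin := by
      rw [hr]
      exact ⟨_, rfl⟩
    rw [mulVec_single_one] at this
    exact this
  choose v hv using hx
  refine ⟨(of v)ᵀ, ?_⟩
  ext i j
  exact congrFun (hv j) i

/-- A matrix vanishing on the kernel of `D` factors through `D` on the left. -/
lemma exists_mul_eq_of_ker_le {n : ℕ} (D Y : Matrix (Fin n) (Fin n) ℝ)
    (h : LinearMap.ker D.mulVecLin ≤ LinearMap.ker Y.mulVecLin) :
    ∃ E : Matrix (Fin n) (Fin n) ℝ, E * D = Y := by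
  obtain ⟨g, hg⟩ := LinearMap.exists_leftInverse_of_injective
    ((LinearMap.ker D.mulVecLin).liftQ D.mulVecLin le_rfl)
    (Submodule.ker_liftQ_eq_bot _ _ _ le_rfl)
  refine ⟨LinearMap.toMatrix' ((LinearMap.ker D.mulVecLin).liftQ Y.mulVecLin h ∘ₗ g), ?_⟩
  apply Matrix.toLin'.injective
  ext1 j
  ext1
  have := LinearMap.congr_fun hg ((LinearMap.ker D.mulVecLin).mkQ (Pi.single j 1))
  simp only [LinearMap.comp_apply, Submodule.mkQ_apply, Submodule.liftQ_apply,
    LinearMap.id_apply] at this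
  simp only [LinearMap.comp_apply, Matrix.toLin'_mul, Matrix.toLin'_toMatrix', LinearMap.coe_single]
  rw [Matrix.toLin'_apply' D, this, Submodule.liftQ_apply, Matrix.toLin'_apply']

/-- Completing the square: the case `P Q P X = P Q` of the Schur complement identity. -/
lemma sub_eq_square {n : ℕ} {P Q X : Matrix (Fin n) (Fin n) ℝ} (hP : P.IsSymm)
    (hPP : P * P = P) (hQ : Q.IsSymm) (hX : P * Q * P * X = P * Q) :
    Q - (1 - P) * (Q - Xᵀ * (P * Q * P) * X) * (1 - P) =
      (P + X * (1 - P))ᵀ * (P * Q * P) * (P + X * (1 - P)) := by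
  have hX' : Xᵀ * (P * Q * P) = Q * P := by
    have := congrArg transpose hX
    simpa only [transpose_mul, hP.eq, hQ.eq, Matrix.mul_assoc] using this
  have e1 : P * (P * Q * P) = P * Q * P := by
    rw [← Matrix.mul_assoc, ← Matrix.mul_assoc, hPP]
  have e2 : P * Q * P * P = P * Q * P := by rw [Matrix.mul_assoc, hPP]
  have e3 : (P + X * (1 - P))ᵀ * (P * Q * P) = P * Q * P + (1 - P) * (Q * P) := by
    rw [transpose_add, transpose_mul, transpose_sub, transpose_one, hP.eq, Matrix.add_mul, e1,
      Matrix.mul_assoc (1 - P), hX']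
  have e4 : Q * P * P = Q * P := by rw [Matrix.mul_assoc, hPP]
  rw [e3, hX', Matrix.mul_add, Matrix.add_mul, Matrix.add_mul, e2, ← Matrix.mul_assoc _ X,
    hX, Matrix.mul_assoc (1 - P) (Q * P) P, e4]
  noncomm_ring

theorem exists_comonotonicity_matrix_iff {n : ℕ} (D M : Matrix (Fin n) (Fin n) ℝ)
    (hM : M.IsSymm) (P : Matrix (Fin n) (Fin n) ℝ)
    (hP : IsOrthProjOnto P (LinearMap.ker D.mulVecLin)) :
    (∃ R : Matrix (Fin n) (Fin n) ℝ, R.IsSymm ∧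
        ∀ xb : Vec n, SemimonotoneAt (fun x => ({D.mulVec x} : Set (Vec n))) M R
          xb (D.mulVec xb)) ↔
      ((-(P * M * P)).PosSemidef ∧
        (P * M * P).rank = (P * ((1 / 2 : ℝ) • D - M)).rank) := by
  obtain ⟨hPs, hPP, hPr⟩ := hP
  have hDP : D * P = 0 := by
    apply Matrix.toLin'.injective
    rw [Matrix.toLin'_mul, map_zero]
    exact LinearMap.range_le_ker_iff.mp hPr.le
  have hPD : P * Dᵀ = 0 := by
    simpa [hPs.eq] using congrArg transpose hDP
  obtain ⟨Q, hQ⟩ : ∃ Q, Q = (1 / 2 : ℝ) • (D + Dᵀ) - M := ⟨_, rfl⟩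
  have hQs : Q.IsSymm := by
    rw [hQ, IsSymm, transpose_sub, transpose_smul, transpose_add, transpose_transpose, hM.eq,
      add_comm]
  have hPQ : P * ((1 / 2 : ℝ) • D - M) = P * Q := by
    rw [hQ, Matrix.mul_sub, Matrix.mul_sub, Matrix.mul_smul, Matrix.mul_smul, Matrix.mul_add, hPD,
      add_zero]
  have hPQP : -(P * M * P) = P * Q * P := by
    rw [← hPQ, Matrix.mul_sub, Matrix.sub_mul, Matrix.mul_smul, Matrix.smul_mul, Matrix.mul_assoc P D,
      hDP, Matrix.mul_zero, smul_zero, zero_sub]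
  have hrk : (P * M * P).rank = (P * Q * P).rank := by
    rw [← hPQP, ← neg_one_smul ℝ (P * M * P)]
    exact (rank_smul_of_mem_nonZeroDivisors _ (by simp)).symm
  rw [hPQP, hPQ, hrk]
  constructor
  · rintro ⟨R, hR, h⟩
    rw [semimonotone_iff_posSemidef D M R hM hR, ← hQ] at h
    have hPS : P * (Q - Dᵀ * R * D) = P * Q := by
      rw [Matrix.mul_sub, ← Matrix.mul_assoc, ← Matrix.mul_assoc, hPD, Matrix.zero_mul,
        Matrix.zero_mul, sub_zero]
    rw [← hPS]
    refine ⟨?_, rank_compress_eq h hPs⟩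
    have := h.mul_mul_conjTranspose_same P
    rwa [conjTranspose_eq_transpose_of_trivial, hPs.eq] at this
  · rintro ⟨hpos, hrank⟩
    obtain ⟨X, hX⟩ := exists_mul_eq_of_rank_eq (P * Q) P hrank
    obtain ⟨E, hE⟩ := exists_mul_eq_of_ker_le D (1 - P) (by
      rw [← hPr]
      rintro _ ⟨x, rfl⟩
      simp [hPP])
    have hRs : (Eᵀ * (Q - Xᵀ * (P * Q * P) * X) * E).IsSymm := by
      simp only [IsSymm, transpose_mul, transpose_sub, transpose_transpose, hPs.eq, hQs.eq,
        Matrix.mul_assoc]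
    refine ⟨_, hRs, ?_⟩
    rw [semimonotone_iff_posSemidef D M _ hM hRs, ← hQ]
    have hE' : Dᵀ * Eᵀ = 1 - P := by
      rw [← transpose_mul, hE, transpose_sub, transpose_one, hPs.eq]
    have hDRD : Dᵀ * (Eᵀ * (Q - Xᵀ * (P * Q * P) * X) * E) * D =
        (1 - P) * (Q - Xᵀ * (P * Q * P) * X) * (1 - P) := by
      rw [← hE', ← Matrix.mul_assoc Dᵀ, ← Matrix.mul_assoc Dᵀ, Matrix.mul_assoc _ E D, hE, hE']
    rw [hDRD, sub_eq_square hPs hPP hQs hX, ← conjTranspose_eq_transpose_of_trivial]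
    exact hpos.conjTranspose_mul_mul_same _
end
end

section
/- Let D ∈ ℝ^{n×m}, let M, Y ∈ ℝ^{m×m} and X ∈ ℝ^{n×n} be symmetric with DᵀXD ⪯ Y, and let T : ℝᵐ ⇉ ℝᵐ be (M, Y)-semimonotone at (Dᵀx̄, ȳ) ∈ graph T. Define the operator D∘T∘Dᵀ : ℝⁿ ⇉ ℝⁿ by (D∘T∘Dᵀ)(x) := {Dv : v ∈ T(Dᵀx)}. Then (x̄, Dȳ) ∈ graph(D∘T∘Dᵀ) and D∘T∘Dᵀ is (D·M·Dᵀ, X)-semimonotone at (x̄, Dȳ). -/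
/-!
With `u = x - xb` and `w = v - yb`, the semimonotonicity of `T` gives
`⟨Dᵀ u, w⟩ ≥ ⟨Dᵀ u, M Dᵀ u⟩ + ⟨w, Y w⟩`. By adjointness the first two terms are `⟨u, D w⟩` and
`⟨u, D M Dᵀ u⟩`, and `Dᵀ X D ⪯ Y` gives `⟨w, Y w⟩ ≥ ⟨D w, X D w⟩`.
-/

open Matrix

noncomputable section

theorem semimonotone_congruence {n m : ℕ} (D : Matrix (Fin n) (Fin m) ℝ)
    (M Y : Matrix (Fin m) (Fin m) ℝ) (X : Matrix (Fin n) (Fin n) ℝ)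
    (hM : M.IsSymm) (hY : Y.IsSymm) (hX : X.IsSymm)
    (hle : (Y - Dᵀ * X * D).PosSemidef)
    (T : Vec m → Set (Vec m)) (xb : Vec n) (yb : Vec m)
    (hgraph : yb ∈ T (Dᵀ.mulVec xb))
    (hsemi : SemimonotoneAt T M Y (Dᵀ.mulVec xb) yb) :
    D.mulVec yb ∈ (fun x => {w | ∃ v ∈ T (Dᵀ.mulVec x), w = D.mulVec v}) xb ∧
    SemimonotoneAt (fun x => {w | ∃ v ∈ T (Dᵀ.mulVec x), w = D.mulVec v})
      (D * M * Dᵀ) X xb (D.mulVec yb) := by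
  refine ⟨⟨yb, hgraph, rfl⟩, ?_⟩
  rintro x _ ⟨v, hv, rfl⟩
  have h := hsemi _ v hv
  have hp := hle.dotProduct_mulVec_nonneg (v - yb)
  rw [← Matrix.mulVec_sub] at h ⊢
  generalize x - xb = u at h ⊢
  generalize v - yb = w at h hp ⊢
  -- Adjointness `⟨a, D z⟩ = ⟨Dᵀ a, z⟩` turns the terms in `u` into terms in `Dᵀ u`.
  have adj : ∀ (a : Vec n) (z : Vec m), a ⬝ᵥ D.mulVec z = Dᵀ.mulVec a ⬝ᵥ z := fun a z => by
    rw [Matrix.dotProduct_mulVec, Matrix.mulVec_transpose]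
  have e : w ⬝ᵥ (Dᵀ * X * D).mulVec w = D.mulVec w ⬝ᵥ X.mulVec (D.mulVec w) := by
    rw [← Matrix.mulVec_mulVec, ← Matrix.mulVec_mulVec, dotProduct_comm, ← adj, dotProduct_comm]
  rw [star_trivial, Matrix.sub_mulVec, dotProduct_sub, e] at hp
  rw [adj, ← Matrix.mulVec_mulVec, ← Matrix.mulVec_mulVec, adj]
  linarith
end
end

section
/- Let M_A, R_A, M_B, R_B, S ∈ ℝ^{n×n} be symmetric matrices such that ⟨u+v, S(u+v)⟩ ≤ ⟨u, R_A u⟩ + ⟨v, R_B v⟩ for all u, v ∈ ℝⁿ. Let A : ℝⁿ ⇉ ℝⁿ be (M_A, R_A)-semimonotone at (x̄, ȳ_A) ∈ graph A and B : ℝⁿ ⇉ ℝⁿ be (M_B, R_B)-semimonotone at (x̄, ȳ_B) ∈ graph B (with the same first component x̄). Then the sum operator (A + B)(x) := {a + b : a ∈ A x, b ∈ B x} satisfies (x̄, ȳ_A + ȳ_B) ∈ graph(A+B) and A + B is (M_A + M_B, S)-semimonotone at (x̄, ȳ_A + ȳ_B). (In particular, when R_A and R_B are parallel summable with R_A + R_B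 ⪰ 0, this applies with S equal to the parallel sum of R_A and R_B.) -/
open Matrix

noncomputable section

/-- The sum operator `(A + B)(x) = {a + b : a ∈ A x, b ∈ B x}`. -/
def sumOp {n : ℕ} (A B : Vec n → Set (Vec n)) : Vec n → Set (Vec n) :=
  fun x => {v | ∃ a ∈ A x, ∃ b ∈ B x, v = a + b}

theorem semimonotone_sum {n : ℕ} (MA RA MB RB S : Matrix (Fin n) (Fin n) ℝ)
    (hMA : MA.IsSymm) (hRA : RA.IsSymm) (hMB : MB.IsSymm) (hRB : RB.IsSymm)
    (hS : S.IsSymm)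
    (hSle : ∀ u v : Vec n,
      (u + v) ⬝ᵥ S.mulVec (u + v) ≤ u ⬝ᵥ RA.mulVec u + v ⬝ᵥ RB.mulVec v)
    (A B : Vec n → Set (Vec n)) (xb yA yB : Vec n)
    (hgA : yA ∈ A xb) (hgB : yB ∈ B xb)
    (hA : SemimonotoneAt A MA RA xb yA)
    (hB : SemimonotoneAt B MB RB xb yB) :
    (yA + yB) ∈ sumOp A B xb ∧
    SemimonotoneAt (sumOp A B) (MA + MB) S xb (yA + yB) := by
  refine ⟨⟨yA, hgA, yB, hgB, rfl⟩, ?_⟩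
  rintro x _ ⟨a, ha, b, hb, rfl⟩
  have h1 := hA x a ha
  have h2 := hB x b hb
  -- The increments in the two graphs serve as `u` and `v` in the bound on `S`.
  have h3 := hSle (a - yA) (b - yB)
  rw [add_sub_add_comm, Matrix.add_mulVec, dotProduct_add, dotProduct_add]
  linarith
end
end

section
/- Let M_A, R_A, M_B, R_B, S ∈ ℝ^{n×n} be symmetric matrices such that ⟨u+v, S(u+v)⟩ ≤ ⟨u, M_A u⟩ + ⟨v, M_B v⟩ for all u, v ∈ ℝⁿ. Let A : ℝⁿ ⇉ ℝⁿ be (M_A, R_A)-semimonotone at (x̄_A, ȳ) ∈ graph A and B : ℝⁿ ⇉ ℝⁿ be (M_B, R_B)-semimonotone at (x̄_B, ȳ) ∈ graph B (with the same second component ȳ). Then the parallel sum A □ B := (A⁻¹ + B⁻¹)⁻¹, whose graph is {(x_A + x_B, y) : y ∈ A x_A, y ∈ B x_B}, satisfies (x̄_A + x̄_B, ȳ) ∈ graph(A □ B) and A □ B is (S, R_A + R_B)-semimonotone at (x̄_A + x̄_B, ȳ). -/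
open Matrix

noncomputable section

/-- The parallel sum `A □ B = (A⁻¹ + B⁻¹)⁻¹`, whose graph is
`{(x_A + x_B, y) : y ∈ A x_A, y ∈ B x_B}`. -/
def parOp {n : ℕ} (A B : Vec n → Set (Vec n)) : Vec n → Set (Vec n) :=
  fun x => {y | ∃ xA xB, y ∈ A xA ∧ y ∈ B xB ∧ x = xA + xB}

theorem semimonotone_parallel_sum {n : ℕ} (MA RA MB RB S : Matrix (Fin n) (Fin n) ℝ)
    (hMA : MA.IsSymm) (hRA : RA.IsSymm) (hMB : MB.IsSymm) (hRB : RB.IsSymm)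
    (hS : S.IsSymm)
    (hSle : ∀ u v : Vec n,
      (u + v) ⬝ᵥ S.mulVec (u + v) ≤ u ⬝ᵥ MA.mulVec u + v ⬝ᵥ MB.mulVec v)
    (A B : Vec n → Set (Vec n)) (xA xB yb : Vec n)
    (hgA : yb ∈ A xA) (hgB : yb ∈ B xB)
    (hA : SemimonotoneAt A MA RA xA yb)
    (hB : SemimonotoneAt B MB RB xB yb) :
    yb ∈ parOp A B (xA + xB) ∧
    SemimonotoneAt (parOp A B) S (RA + RB) (xA + xB) yb := by
  refine ⟨⟨xA, xB, hgA, hgB, rfl⟩, ?_⟩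
  rintro _ y ⟨x₁, x₂, h₁, h₂, rfl⟩
  have e : x₁ + x₂ - (xA + xB) = (x₁ - xA) + (x₂ - xB) := add_sub_add_comm _ _ _ _
  have a := hA x₁ y h₁
  have b := hB x₂ y h₂
  -- The matrix inequality is applied to the deviations of the two summands.
  have c := hSle (x₁ - xA) (x₂ - xB)
  rw [e, add_dotProduct (x₁ - xA) (x₂ - xB) (y - yb), Matrix.add_mulVec, dotProduct_add]
  linarith
end
end

section
/- Let D ∈ ℝ^{n×n} be skew-symmetric (Dᵀ = −D), and let M, R, R′, S ∈ ℝ^{n×n} be symmetric matrices such that D·R′ = 0 (i.e., ran R′ ⊆ ker D) and ⟨u+v, S(u+v)⟩ ≤ ⟨u, M u⟩ + ⟨v, R v⟩ for all u, v ∈ ℝⁿ. Let T : ℝⁿ ⇉ ℝⁿ be (DᵀMD, R + R′)-semimonotone at (x̄, ȳ) ∈ graph T. Then the operator (T + D)(x) := {y + Dx : y ∈ T x} satisfies (x̄, ȳ + Dx̄) ∈ graph(T + D) and T + D is (0, R′ + S)-semimonotone at (x̄, ȳ + Dx̄). -/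
/-!
Write `p = x - xb` and `q = y - yb`, so that the output increment of `T + D` is `D p + q`.
Skew-symmetry gives `⟨p, D p + q⟩ = ⟨p, q⟩`. The semimonotonicity of `T` bounds this below by
`⟨D p, M (D p)⟩ + ⟨q, R q⟩ + ⟨q, R' q⟩`, whose first two terms dominate the `S`-form at `D p + q`
by `hSle` with `u = D p`, `v = q`. Transposing `D R' = 0` gives `R' D = 0`,
so the `R'`-form takes the same value at `q` and at `D p + q`.
-/

open Matrix

noncomputable section

/-- The operator `(T + D)(x) = {y + Dx : y ∈ T x}`. -/
def addLin {n : ℕ} (T : Vec n → Set (Vec n)) (D : Matrix (Fin n) (Fin n) ℝ) :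
    Vec n → Set (Vec n) :=
  fun x => {v | ∃ y ∈ T x, v = y + D.mulVec x}

theorem semimonotone_add_skew {n : ℕ} (D M R R' S : Matrix (Fin n) (Fin n) ℝ)
    (hD : Dᵀ = -D)
    (hM : M.IsSymm) (hR : R.IsSymm) (hR' : R'.IsSymm) (hS : S.IsSymm)
    (hDR' : D * R' = 0)
    (hSle : ∀ u v : Vec n,
      (u + v) ⬝ᵥ S.mulVec (u + v) ≤ u ⬝ᵥ M.mulVec u + v ⬝ᵥ R.mulVec v)
    (T : Vec n → Set (Vec n)) (xb yb : Vec n) (hgraph : yb ∈ T xb)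
    (hsemi : SemimonotoneAt T (Dᵀ * M * D) (R + R') xb yb) :
    (yb + D.mulVec xb) ∈ addLin T D xb ∧
    SemimonotoneAt (addLin T D) 0 (R' + S) xb (yb + D.mulVec xb) := by
  refine ⟨⟨yb, hgraph, rfl⟩, ?_⟩
  rintro x _ ⟨y, hy, rfl⟩
  have h := hsemi x y hy
  have hdiff : y + D *ᵥ x - (yb + D *ᵥ xb) = D *ᵥ (x - xb) + (y - yb) := by
    rw [mulVec_sub]; abel
  rw [hdiff]
  generalize x - xb = p at *
  generalize y - yb = q at *
  have hskew : p ⬝ᵥ D *ᵥ p = 0 := by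
    have h1 : p ⬝ᵥ D *ᵥ p = p ⬝ᵥ Dᵀ *ᵥ p := by
      rw [mulVec_transpose, dotProduct_mulVec, dotProduct_comm]
    rw [hD, neg_mulVec, dotProduct_neg] at h1
    linarith
  have hR'D : R' * D = 0 := by
    have h1 := congrArg transpose hDR'
    rw [transpose_mul, hD, hR'.eq, transpose_zero, Matrix.mul_neg] at h1
    exact neg_eq_zero.mp h1
  have hz1 : R' *ᵥ (D *ᵥ p) = 0 := by rw [mulVec_mulVec, hR'D, zero_mulVec]
  have hz2 : (D *ᵥ p) ⬝ᵥ R' *ᵥ q = 0 := by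
    rw [dotProduct_mulVec, ← mulVec_transpose, hR'.eq, hz1, zero_dotProduct]
  have hquad : p ⬝ᵥ (Dᵀ * M * D) *ᵥ p = (D *ᵥ p) ⬝ᵥ M *ᵥ (D *ᵥ p) := by
    rw [← mulVec_mulVec, ← mulVec_mulVec, dotProduct_mulVec, vecMul_transpose]
  have hS' := hSle (D *ᵥ p) q
  rw [hquad, add_mulVec, dotProduct_add] at h
  have hR'q : (D *ᵥ p + q) ⬝ᵥ R' *ᵥ (D *ᵥ p + q) = q ⬝ᵥ R' *ᵥ q := by
    rw [mulVec_add, hz1, zero_add, add_dotProduct, hz2, zero_add]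
  rw [zero_mulVec, dotProduct_zero, add_mulVec, dotProduct_add _ (R' *ᵥ _), hR'q,
    dotProduct_add, hskew]
  linarith
end
end

section
/- Let A : ℝⁿ ⇉ ℝⁿ, B : ℝᵐ ⇉ ℝᵐ be set-valued operators and L ∈ ℝ^{m×n} a nonzero matrix, and let S⋆ ⊆ zer T_PD be nonempty. Let R_A, R_A′, R_B, S_P ∈ ℝ^{n×n} and M_A, M_B, M_B′, S_D ∈ ℝ^{m×m} be symmetric matrices such that: L·R_A′ = 0 (i.e., ran R_A′ ⊆ ker L); Lᵀ·M_B′ = 0 (i.e., ran M_B′ ⊆ ker Lᵀ); ⟨u+v, S_P(u+v)⟩ ≤ ⟨u, R_A u⟩ + ⟨v, R_B v⟩ for all u, v ∈ ℝⁿ; and ⟨u+v, S_D(u+v)⟩ ≤ ⟨u, M_A u⟩ + ⟨v, M_B v⟩ for all u, v ∈ ℝᵐ. Suppose that for every (x⋆, y⋆) ∈ S⋆ the operator A is (Lᵀ·M_A·L, R_A + R_A′)-semimonotone at (x⋆, −Lᵀy⋆) ∈ graph A and B is (M_B + M_B′, L·R_B·Lᵀ)-semimonotone at (L x⋆, y⋆)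 ∈ graph B. Then the primal-dual operator T_PD has V-oblique weak Minty solutions at S⋆, where V := (R_A′ + S_P) ⊕ (M_B′ + S_D) (block diagonal). (In particular, when the parallel sums R_A □ R_B and M_A □ M_B are defined, this applies with S_P = R_A □ R_B and S_D = M_A □ M_B.) -/
/-!
Fix `(x⋆, y⋆) ∈ S` and a point `(a + Lᵀy, b - Lx)` of `T_PD (x, y)`, and put `d = x - x⋆`,
`q = y - y⋆`, `p = a + Lᵀy⋆`, `e = b - Lx⋆`. Then the two components of this point are
`p + Lᵀq` and `-Ld + e`, and the skew-symmetric coupling through `L` cancels in the inner product,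
leaving `⟨d, p⟩ + ⟨e, q⟩`. Semimonotonicity bounds this below by
`⟨Ld, M_A Ld⟩ + ⟨p, (R_A + R_A')p⟩ + ⟨e, (M_B + M_B')e⟩ + ⟨Lᵀq, R_B Lᵀq⟩`.
The hypothesis on `S_P` (at `u = p`, `v = Lᵀq`) and the one on `S_D` (at `u = -Ld`, `v = e`) absorb
the unprimed terms. The primed terms are already of the required form, because `R_A'` and `M_B'` do
not see the ranges of `Lᵀ` and `L` (`quad_add_of_mul_eq_zero`).
-/

open Matrix

noncomputable section

/-- If `K * R = 0` with `R` symmetric, then also `R * Kᵀ = 0`, so shifting the argument by an element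
of the range of `Kᵀ` does not change the quadratic form of `R`. -/
lemma quad_add_of_mul_eq_zero {k l : ℕ} (K : Matrix (Fin l) (Fin k) ℝ)
    (R : Matrix (Fin k) (Fin k) ℝ) (hR : R.IsSymm) (hKR : K * R = 0) (p : Vec k) (w : Vec l) :
    (p + Kᵀ.mulVec w) ⬝ᵥ R.mulVec (p + Kᵀ.mulVec w) = p ⬝ᵥ R.mulVec p := by
  have h : R * Kᵀ = 0 := by
    have := congrArg Matrix.transpose hKR
    rwa [Matrix.transpose_mul, hR.eq, Matrix.transpose_zero] at this
  have h1 : R.mulVec (p + Kᵀ.mulVec w) = R.mulVec p := by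
    rw [Matrix.mulVec_add, Matrix.mulVec_mulVec, h, Matrix.zero_mulVec, add_zero]
  rw [h1, add_dotProduct, Matrix.mulVec_transpose, ← Matrix.dotProduct_mulVec,
    Matrix.mulVec_mulVec, hKR, Matrix.zero_mulVec, dotProduct_zero, add_zero]

lemma quad_conj {k l : ℕ} (K : Matrix (Fin l) (Fin k) ℝ) (M : Matrix (Fin l) (Fin l) ℝ)
    (d : Vec k) :
    d ⬝ᵥ (Kᵀ * M * K).mulVec d = K.mulVec d ⬝ᵥ M.mulVec (K.mulVec d) := by
  rw [← Matrix.mulVec_mulVec, ← Matrix.mulVec_mulVec, Matrix.dotProduct_mulVec,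
    Matrix.vecMul_transpose]

theorem owms_of_semimonotone_matrices {n m : ℕ}
    (A : Vec n → Set (Vec n)) (B : Vec m → Set (Vec m))
    (L : Matrix (Fin m) (Fin n) ℝ) (hL : L ≠ 0)
    (S : Set (Vec n × Vec m)) (hSne : S.Nonempty) (hSsub : S ⊆ zerTPD A B L)
    (RA RA' RB SP : Matrix (Fin n) (Fin n) ℝ)
    (MA MB MB' SD : Matrix (Fin m) (Fin m) ℝ)
    (hRA : RA.IsSymm) (hRA' : RA'.IsSymm) (hRB : RB.IsSymm) (hSP : SP.IsSymm)
    (hMA : MA.IsSymm) (hMB : MB.IsSymm) (hMB' : MB'.IsSymm) (hSD : SD.IsSymm)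
    (hLRA' : L * RA' = 0) (hLTMB' : Lᵀ * MB' = 0)
    (hSPle : ∀ u v : Vec n,
      (u + v) ⬝ᵥ SP.mulVec (u + v) ≤ u ⬝ᵥ RA.mulVec u + v ⬝ᵥ RB.mulVec v)
    (hSDle : ∀ u v : Vec m,
      (u + v) ⬝ᵥ SD.mulVec (u + v) ≤ u ⬝ᵥ MA.mulVec u + v ⬝ᵥ MB.mulVec v)
    (hA : ∀ z ∈ S, -(Lᵀ.mulVec z.2) ∈ A z.1 ∧
      SemimonotoneAt A (Lᵀ * MA * L) (RA + RA') z.1 (-(Lᵀ.mulVec z.2)))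
    (hB : ∀ z ∈ S, z.2 ∈ B (L.mulVec z.1) ∧
      SemimonotoneAt B (MB + MB') (L * RB * Lᵀ) (L.mulVec z.1) z.2) :
    HasOWMSPD A B L (RA' + SP) (MB' + SD) S := by
  refine ⟨hSne, hSsub, ?_⟩
  rintro ⟨xs, ys⟩ hs ⟨x, y⟩ _ ⟨a, b, ha, hb, rfl⟩
  have hA' := (hA _ hs).2 x a ha
  have hB' := (hB _ hs).2 b y hb
  dsimp only at ha hb hA' hB' ⊢
  rw [sub_neg_eq_add] at hA'
  have e1 : a + Lᵀ.mulVec y = (a + Lᵀ.mulVec ys) + Lᵀ.mulVec (y - ys) := by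
    rw [Matrix.mulVec_sub]; abel
  have e2 : b - L.mulVec x = -L.mulVec (x - xs) + (b - L.mulVec xs) := by
    rw [Matrix.mulVec_sub]; abel
  rw [e1, e2]
  -- From here on only the differences `p, e, d, q` matter.
  generalize a + Lᵀ.mulVec ys = p at *
  generalize b - L.mulVec xs = e at *
  generalize x - xs = d at *
  generalize y - ys = q at *
  have hP := hSPle p (Lᵀ.mulVec q)
  have hD := hSDle (-L.mulVec d) e
  have qP := quad_add_of_mul_eq_zero L RA' hRA' hLRA' p q
  -- The range of `L` is reached through `Lᵀᵀ`, with coefficient vector `-d`.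
  have qD := quad_add_of_mul_eq_zero Lᵀ MB' hMB' hLTMB' e (-d)
  rw [Matrix.transpose_transpose, Matrix.mulVec_neg, add_comm e] at qD
  have cA := quad_conj L MA d
  have cB := quad_conj Lᵀ RB q
  rw [Matrix.transpose_transpose] at cB
  -- The two coupling terms through `L` are equal, so they cancel in the pairing.
  have hskew : Lᵀ.mulVec q ⬝ᵥ d = L.mulVec d ⬝ᵥ q := by
    rw [Matrix.mulVec_transpose, ← Matrix.dotProduct_mulVec, dotProduct_comm]
  have hpair : (p + Lᵀ.mulVec q) ⬝ᵥ d + (-L.mulVec d + e) ⬝ᵥ q = d ⬝ᵥ p + e ⬝ᵥ q := by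
    rw [add_dotProduct, add_dotProduct, neg_dotProduct, hskew, dotProduct_comm p d]; ring
  rw [Matrix.mulVec_neg, neg_dotProduct_neg] at hD
  rw [cA, Matrix.add_mulVec, dotProduct_add] at hA'
  rw [cB, Matrix.add_mulVec, dotProduct_add] at hB'
  rw [hpair, Matrix.add_mulVec RA', Matrix.add_mulVec MB', dotProduct_add (_ + _) (RA'.mulVec _),
    dotProduct_add (_ + _) (MB'.mulVec _), qP, qD]
  linarith
end
end

section
/- Let A : ℝⁿ ⇉ ℝⁿ, B : ℝᵐ ⇉ ℝᵐ be set-valued operators, let L ∈ ℝ^{m×n} be nonzero, and let S⋆ ⊆ zer T_PD be nonempty. Let μ_A, μ_B, ρ_A, ρ_B ∈ ℝ satisfy (μ_A + μ_B > 0 or μ_A = μ_B = 0) and (ρ_A + ρ_B > 0 or ρ_A = ρ_B = 0), and suppose that for every (x⋆, y⋆) ∈ S⋆ the operator A is (μ_A·LᵀL, ρ_A·I_n)-semimonotone at (x⋆, −Lᵀy⋆) ∈ graph A and B is (μ_B·I_m, ρ_B·L Lᵀ)-semimonotone at (L x⋆, y⋆) ∈ graph B. Then T_PD has V-oblique weak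 Minty solutions at S⋆, where V := ((ρ_A □ ρ_B)·Π_{ran Lᵀ} + ρ_A·Π_{ker L}) ⊕ ((μ_A □ μ_B)·Π_{ran L} + μ_B·Π_{ker Lᵀ}) (block diagonal), and a □ b := ab/(a+b) if a + b ≠ 0 and a □ b := 0 if a = b = 0. -/
/-!
Write `p = x - x⋆`, `q = y - y⋆`. For `v₁ = a + Lᵀy` and `v₂ = b - Lx`, the cross terms
`⟨Lᵀq, p⟩` and `-⟨Lp, q⟩` cancel, so `⟨v, z - z⋆⟩` is the sum of the left-hand sides of the two
semimonotonicity inequalities, and hence is at least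
`ρA ‖v₁ - Lᵀq‖² + ρB ‖Lᵀq‖² + μB ‖v₂ + Lp‖² + μA ‖Lp‖²`.
Minimising the first two terms over `Lᵀq ∈ ran Lᵀ` and the last two over `Lp ∈ ran L` produces the
parallel sums on the ranges, while the components orthogonal to the ranges keep the weights `ρA`
and `μB`. This minimisation is `parSum_proj_le`; it rests on the orthogonal decomposition
`ran M ⊕ ker Mᵀ` (`proj_range_add_proj_ker`).
-/

open Matrix

noncomputable section

/-- Parallel sum of extended-real parameters: `a □ b = ab/(a+b)` if `a + b ≠ 0`,
and `0` if `a = b = 0`. -/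
def parSumR (a b : ℝ) : ℝ := if a + b = 0 then 0 else a * b / (a + b)

lemma parSumR_comm (a b : ℝ) : parSumR a b = parSumR b a := by
  simp only [parSumR, add_comm a b, mul_comm a b]

lemma IsOrthProjOnto.mulVec_eq_self {k : ℕ} {P : Matrix (Fin k) (Fin k) ℝ}
    {S : Submodule ℝ (Vec k)} (hP : IsOrthProjOnto P S) {x : Vec k} (hx : x ∈ S) :
    P *ᵥ x = x := by
  obtain ⟨_, h2, h3⟩ := hP
  rw [← h3] at hx
  obtain ⟨y, rfl⟩ := hx
  simp [mulVec_mulVec, h2]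

lemma IsOrthProjOnto.mulVec_mem {k : ℕ} {P : Matrix (Fin k) (Fin k) ℝ}
    {S : Submodule ℝ (Vec k)} (hP : IsOrthProjOnto P S) (x : Vec k) : P *ᵥ x ∈ S := by
  rw [← hP.2.2]
  exact ⟨x, rfl⟩

lemma IsOrthProjOnto.dotProduct_comm {k : ℕ} {P : Matrix (Fin k) (Fin k) ℝ}
    {S : Submodule ℝ (Vec k)} (hP : IsOrthProjOnto P S) (x y : Vec k) :
    x ⬝ᵥ P *ᵥ y = P *ᵥ x ⬝ᵥ y := by
  rw [dotProduct_mulVec, ← mulVec_transpose, hP.1.eq]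

lemma IsOrthProjOnto.dotProduct_self {k : ℕ} {P : Matrix (Fin k) (Fin k) ℝ}
    {S : Submodule ℝ (Vec k)} (hP : IsOrthProjOnto P S) (x : Vec k) :
    x ⬝ᵥ P *ᵥ x = P *ᵥ x ⬝ᵥ P *ᵥ x := by
  rw [← hP.dotProduct_comm, mulVec_mulVec, hP.2.1]

/-- `⟨x, M q⟩ = ⟨Mᵀ x, q⟩ = 0` for `x ∈ ker Mᵀ`. -/
lemma dotProduct_mulVec_eq_zero {k l : ℕ} {M : Matrix (Fin k) (Fin l) ℝ} {x : Vec k}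
    (hx : x ∈ LinearMap.ker (Mᵀ).mulVecLin) (q : Vec l) : x ⬝ᵥ M *ᵥ q = 0 := by
  have h : Mᵀ *ᵥ x = 0 := hx
  rw [dotProduct_mulVec, ← mulVec_transpose, h, zero_dotProduct]

/-- The projections onto `ran M` and `ker Mᵀ` add up to the identity. -/
lemma proj_range_add_proj_ker {k l : ℕ} (M : Matrix (Fin k) (Fin l) ℝ)
    {P K : Matrix (Fin k) (Fin k) ℝ}
    (hP : IsOrthProjOnto P (LinearMap.range M.mulVecLin))
    (hK : IsOrthProjOnto K (LinearMap.ker (Mᵀ).mulVecLin)) (v : Vec k) :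
    P *ᵥ v + K *ᵥ v = v := by
  have hmem : v - P *ᵥ v ∈ LinearMap.ker (Mᵀ).mulVecLin := by
    rw [LinearMap.mem_ker, mulVecLin_apply]
    refine dotProduct_eq_zero _ fun u => ?_
    have hu : P *ᵥ (M *ᵥ u) = M *ᵥ u := hP.mulVec_eq_self ⟨u, rfl⟩
    rw [mulVec_transpose, ← dotProduct_mulVec, sub_dotProduct, ← hP.dotProduct_comm, hu,
      sub_self]
  have hKP : K *ᵥ (P *ᵥ v) = 0 := by
    obtain ⟨q, hq⟩ := hP.mulVec_mem v
    refine dotProduct_eq_zero _ fun u => ?_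
    rw [← hK.dotProduct_comm, ← hq, _root_.dotProduct_comm]
    exact dotProduct_mulVec_eq_zero (hK.mulVec_mem u) q
  have h := hK.mulVec_eq_self hmem
  rw [mulVec_sub, hKP, sub_zero] at h
  rw [h, add_sub_cancel]

/-- The quadratic form with weight `a □ b` on `ran M` and `a` on `ker Mᵀ` bounds
`a ‖v - u‖² + b ‖u‖²` from below for every `u ∈ ran M`. -/
lemma parSum_proj_le {k l : ℕ} (M : Matrix (Fin k) (Fin l) ℝ)
    {P K : Matrix (Fin k) (Fin k) ℝ}
    (hP : IsOrthProjOnto P (LinearMap.range M.mulVecLin))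
    (hK : IsOrthProjOnto K (LinearMap.ker (Mᵀ).mulVecLin))
    {a b : ℝ} (hab : a + b > 0 ∨ (a = 0 ∧ b = 0)) (v : Vec k) (q : Vec l) :
    v ⬝ᵥ (parSumR a b • P + a • K) *ᵥ v ≤
      a * ((v - M *ᵥ q) ⬝ᵥ (v - M *ᵥ q)) + b * (M *ᵥ q ⬝ᵥ M *ᵥ q) := by
  rw [add_mulVec, smul_mulVec, smul_mulVec, dotProduct_add, dotProduct_smul, dotProduct_smul,
    hP.dotProduct_self, hK.dotProduct_self, smul_eq_mul, smul_eq_mul]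
  have hsu : K *ᵥ v ⬝ᵥ M *ᵥ q = 0 := dotProduct_mulVec_eq_zero (hK.mulVec_mem v) q
  have hsw : K *ᵥ v ⬝ᵥ P *ᵥ v = 0 := by
    obtain ⟨r, hr⟩ := hP.mulVec_mem v
    rw [← hr]
    exact dotProduct_mulVec_eq_zero (hK.mulVec_mem v) r
  have hv := proj_range_add_proj_ker M hP hK v
  generalize P *ᵥ v = w at *
  generalize K *ᵥ v = s at *
  generalize M *ᵥ q = u at *
  subst hv
  have hexp : (w + s - u) ⬝ᵥ (w + s - u) = w ⬝ᵥ w - 2 * (w ⬝ᵥ u) + u ⬝ᵥ u + s ⬝ᵥ s := by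
    simp only [sub_dotProduct, dotProduct_sub, add_dotProduct, dotProduct_add,
      _root_.dotProduct_comm w s, _root_.dotProduct_comm u s, _root_.dotProduct_comm u w,
      hsu, hsw]
    ring
  rw [hexp]
  rcases hab with h | ⟨rfl, rfl⟩
  · -- `a ‖w - u‖² + b ‖u‖² - (a □ b) ‖w‖² = ‖(a + b) u - a w‖² / (a + b)`
    have hsq : 0 ≤ ((a + b) • u - a • w) ⬝ᵥ ((a + b) • u - a • w) :=
      Finset.sum_nonneg fun _ _ => mul_self_nonneg _
    simp only [sub_dotProduct, dotProduct_sub, smul_dotProduct, dotProduct_smul, smul_eq_mul,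
      _root_.dotProduct_comm u w] at hsq
    have hmin : a * b / (a + b) * (w ⬝ᵥ w) ≤
        a * (w ⬝ᵥ w - 2 * (w ⬝ᵥ u) + u ⬝ᵥ u) + b * (u ⬝ᵥ u) := by
      rw [div_mul_eq_mul_div, div_le_iff₀ h]
      linarith
    rw [parSumR, if_neg h.ne']
    linarith
  · simp [parSumR]

lemma dotProduct_transpose_mul_self {k l : ℕ} (M : Matrix (Fin k) (Fin l) ℝ) (x : Vec l) :
    x ⬝ᵥ (Mᵀ * M) *ᵥ x = M *ᵥ x ⬝ᵥ M *ᵥ x := by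
  rw [← mulVec_mulVec, dotProduct_mulVec, ← mulVec_transpose, transpose_transpose]

theorem owms_of_scalar_semimonotone {n m : ℕ}
    (A : Vec n → Set (Vec n)) (B : Vec m → Set (Vec m))
    (L : Matrix (Fin m) (Fin n) ℝ) (hL : L ≠ 0)
    (S : Set (Vec n × Vec m)) (hSne : S.Nonempty) (hSsub : S ⊆ zerTPD A B L)
    (μA μB ρA ρB : ℝ)
    (hμ : μA + μB > 0 ∨ (μA = 0 ∧ μB = 0))
    (hρ : ρA + ρB > 0 ∨ (ρA = 0 ∧ ρB = 0))
    (PrLT PkL : Matrix (Fin n) (Fin n) ℝ) (PrL PkLT : Matrix (Fin m) (Fin m) ℝ)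
    (hPrLT : IsOrthProjOnto PrLT (LinearMap.range (Lᵀ).mulVecLin))
    (hPkL : IsOrthProjOnto PkL (LinearMap.ker L.mulVecLin))
    (hPrL : IsOrthProjOnto PrL (LinearMap.range L.mulVecLin))
    (hPkLT : IsOrthProjOnto PkLT (LinearMap.ker (Lᵀ).mulVecLin))
    (hA : ∀ z ∈ S, -(Lᵀ.mulVec z.2) ∈ A z.1 ∧
      SemimonotoneAt A (μA • (Lᵀ * L)) (ρA • (1 : Matrix (Fin n) (Fin n) ℝ))
        z.1 (-(Lᵀ.mulVec z.2)))
    (hB : ∀ z ∈ S, z.2 ∈ B (L.mulVec z.1) ∧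
      SemimonotoneAt B (μB • (1 : Matrix (Fin m) (Fin m) ℝ)) (ρB • (L * Lᵀ))
        (L.mulVec z.1) z.2) :
    HasOWMSPD A B L (parSumR ρA ρB • PrLT + ρA • PkL)
      (parSumR μA μB • PrL + μB • PkLT) S := by
  refine ⟨hSne, hSsub, ?_⟩
  rintro ⟨xs, ys⟩ hzs ⟨x, y⟩ v ⟨a, b, ha, hb, rfl⟩
  have h1 := (hA _ hzs).2 x a ha
  have h2 := (hB _ hzs).2 b y hb
  have h3 := parSum_proj_le Lᵀ hPrLT (by rwa [transpose_transpose]) hρ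
    (a + Lᵀ *ᵥ y) (y - ys)
  have h4 := parSum_proj_le L hPrL hPkLT
    (show μB + μA > 0 ∨ (μB = 0 ∧ μA = 0) by rwa [add_comm, and_comm])
    (b - L *ᵥ x) (-(x - xs))
  have e1 : a + Lᵀ *ᵥ y - Lᵀ *ᵥ (y - ys) = a - -(Lᵀ *ᵥ ys) := by
    rw [mulVec_sub]; abel
  have e2 : b - L *ᵥ x - L *ᵥ (-(x - xs)) = b - L *ᵥ xs := by
    rw [mulVec_neg, mulVec_sub]; abel
  have hLLT := dotProduct_transpose_mul_self Lᵀ (y - ys)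
  rw [transpose_transpose] at hLLT
  rw [e1] at h3
  rw [e2, parSumR_comm, mulVec_neg, neg_dotProduct_neg] at h4
  simp only [smul_mulVec, one_mulVec, dotProduct_smul, smul_eq_mul,
    dotProduct_transpose_mul_self, hLLT] at h1 h2
  -- The coupling terms `⟨Lᵀq, p⟩` and `-⟨Lp, q⟩` cancel.
  have key : (a + Lᵀ *ᵥ y) ⬝ᵥ (x - xs) + (b - L *ᵥ x) ⬝ᵥ (y - ys) =
      (x - xs) ⬝ᵥ (a - -(Lᵀ *ᵥ ys)) + (b - L *ᵥ xs) ⬝ᵥ (y - ys) := by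
    have hadj : Lᵀ *ᵥ (y - ys) ⬝ᵥ (x - xs) = L *ᵥ (x - xs) ⬝ᵥ (y - ys) := by
      rw [mulVec_transpose, ← dotProduct_mulVec, dotProduct_comm]
    rw [← e1, dotProduct_comm (x - xs), sub_dotProduct (a + Lᵀ *ᵥ y), hadj,
      show b - L *ᵥ xs = b - L *ᵥ x + L *ᵥ (x - xs) by rw [mulVec_sub]; abel,
      add_dotProduct (b - L *ᵥ x)]
    ring
  change _ ≤ (a + Lᵀ *ᵥ y) ⬝ᵥ (x - xs) + (b - L *ᵥ x) ⬝ᵥ (y - ys)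
  rw [key]
  exact (add_le_add h3 h4).trans (by linarith)
end
end

section
/- Let l, u ∈ ℝⁿ with l_i < u_i for every i, and let C := {x ∈ ℝⁿ : l_i ≤ x_i ≤ u_i for all i} be the corresponding box. Let N_C be the normal cone operator of C, i.e., N_C(x̃) := {v ∈ ℝⁿ : ⟨v, x − x̃⟩ ≤ 0 for all x ∈ C} if x̃ ∈ C and N_C(x̃) := ∅ otherwise. Then for every (x̃, ṽ) ∈ graph N_C, the operator N_C is (D, 0)-semimonotone at (x̃, ṽ), where D := diag(|ṽ_1|/(u_1 − l_1), …, |ṽ_n|/(u_n − l_n)); that is, for all (x, v) ∈ graph N_C one has ⟨x − x̃, v − ṽ⟩ ≥ Σ_{i=1}^{n} (|ṽ_i|/(u_i − l_i))·(x_i − x̃_i)². -/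
/-!
The normal cone of a box splits into coordinates: if `v ∈ N_C(x)`, then moving only the `i`-th
coordinate of `x` inside `[l i, u i]` gives `v i * (t - x i) ≤ 0` for every `t` in that interval
(`normalCone_coord`). Hence, for two points `(xt, vt)` and `(x, v)` of the graph, both
`v i * (xt i - x i) ≤ 0` and `vt i * (x i - xt i) ≤ 0`. The second sign condition says
`-(vt i * (x i - xt i)) = |vt i| * |x i - xt i|`, and since `|x i - xt i| ≤ u i - l i`, this is at
least `|vt i| / (u i - l i) * (x i - xt i) ^ 2`. The claim follows by summing over the coordinates.
-/

open Matrix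

noncomputable section

/-- The box `{x : l ≤ x ≤ u}`. -/
def box {n : ℕ} (l u : Vec n) : Set (Vec n) := {x | ∀ i, l i ≤ x i ∧ x i ≤ u i}

/-- The normal cone operator of the box. -/
def normalCone {n : ℕ} (l u : Vec n) : Vec n → Set (Vec n) :=
  fun xt => {v | xt ∈ box l u ∧ ∀ x ∈ box l u, v ⬝ᵥ (x - xt) ≤ 0}

theorem normalCone_coord {n : ℕ} {l u x v : Vec n} (hv : v ∈ normalCone l u x) (i : Fin n)
    {t : ℝ} (hl : l i ≤ t) (hu : t ≤ u i) : v i * (t - x i) ≤ 0 := by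
  have hmem : Function.update x i t ∈ box l u := by
    intro j
    rcases eq_or_ne j i with rfl | hj
    · simpa using ⟨hl, hu⟩
    · simpa [Function.update_of_ne hj] using hv.1 j
  have hsub : Function.update x i t - x = Pi.single i (t - x i) := by
    ext j
    rcases eq_or_ne j i with rfl | hj
    · simp
    · simp [hj]
  have h := hv.2 _ hmem
  rwa [hsub, dotProduct_single] at h

/-- The one-dimensional inequality, with `d` the displacement in a single coordinate and `c` the
side length of the box. -/
theorem abs_div_mul_sq_le {c d w : ℝ} (hc : 0 < c) (hd : |d| ≤ c) (hw : w * d ≤ 0) :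
    |w| / c * d ^ 2 ≤ -(w * d) := by
  rw [← abs_of_nonpos hw, abs_mul, ← sq_abs d, div_mul_eq_mul_div, div_le_iff₀ hc]
  calc |w| * |d| ^ 2 = |w| * |d| * |d| := by ring
    _ ≤ |w| * |d| * c := by gcongr

theorem box_normal_cone_semimonotone {n : ℕ} (l u : Vec n) (hlu : ∀ i, l i < u i) :
    ∀ xt vt, vt ∈ normalCone l u xt →
      SemimonotoneAt (normalCone l u)
        (Matrix.diagonal (fun i => |vt i| / (u i - l i))) 0 xt vt ∧
      (∀ x v, v ∈ normalCone l u x →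
        (x - xt) ⬝ᵥ (v - vt) ≥ ∑ i, |vt i| / (u i - l i) * (x i - xt i) ^ 2) := by
  intro xt vt hvt
  have key : ∀ x v, v ∈ normalCone l u x →
      (x - xt) ⬝ᵥ (v - vt) ≥ ∑ i, |vt i| / (u i - l i) * (x i - xt i) ^ 2 := by
    intro x v hv
    refine Finset.sum_le_sum fun i _ => ?_
    obtain ⟨hl, hu⟩ := hv.1 i
    obtain ⟨hlt, hut⟩ := hvt.1 i
    have h1 := normalCone_coord hv i hlt hut
    have h2 := abs_div_mul_sq_le (sub_pos.2 (hlu i))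
      (abs_le.2 ⟨by linarith, by linarith⟩) (normalCone_coord hvt i hl hu)
    simp only [Pi.sub_apply]
    linarith
  refine ⟨fun x v hv => ?_, key⟩
  have hquad : (x - xt) ⬝ᵥ (Matrix.diagonal fun i => |vt i| / (u i - l i)).mulVec (x - xt)
      = ∑ i, |vt i| / (u i - l i) * (x i - xt i) ^ 2 := by
    refine Finset.sum_congr rfl fun i _ => ?_
    rw [Matrix.mulVec_diagonal, Pi.sub_apply]
    ring
  rw [hquad, Matrix.zero_mulVec, dotProduct_zero, add_zero]
  exact key x v hv
end
end
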